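/- Let d ≥ 1 and let γ be the standard Gaussian measure on ℝ^d. For every centered probability measure μ on ℝ^d (i.e. ∫ x dμ(x) = 0) with finite second moment, and every probability measure ν on ℝ^d with finite second moment, one has W₂(μ, ν)² ≤ 2 Ent_γ(μ) + 2 Ent_γ(ν). -/

import Mathlib

open MeasureTheory ENNReal
open scoped RealInnerProductSpace

/-- The standard Gaussian measure on `ℝ^d`, with density
`(2π)^{-d/2} exp(-|x|²/2)` with respect to Lebesgue measure. -/
noncomputable def stdGaussian (d : ℕ) : Measure (EuclideanSpace ℝ (Fin d)) :=
  volume.withDensity fun x =>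
    ENNReal.ofReal ((2 * Real.pi) ^ (-(d : ℝ) / 2) * Real.exp (-‖x‖ ^ 2 / 2))

/-- `π` is a coupling of `μ` and `ν`: a measure on the product with the given marginals. -/
def IsCoupling {E : Type*} [MeasurableSpace E] (π : Measure (E × E)) (μ ν : Measure E) : Prop :=
  π.map Prod.fst = μ ∧ π.map Prod.snd = ν

/-- The squared `L²` Kantorovich-Wasserstein distance `W₂(μ,ν)²`: the infimum of
`∫ |x-y|² dπ` over all couplings `π` of `μ` and `ν`. -/
noncomputable def W2sq {E : Type*} [MeasurableSpace E] [NormedAddCommGroup E]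
    (μ ν : Measure E) : ℝ≥0∞ :=
  ⨅ (π : Measure (E × E)) (_ : IsCoupling π μ ν), ∫⁻ p, (‖p.1 - p.2‖₊ : ℝ≥0∞) ^ 2 ∂π

open Classical in
/-- The relative entropy (KL divergence) `Ent_γ(μ) = ∫ log(dμ/dγ) dμ` if `μ ≪ γ` (and the
integral makes sense), and `+∞` otherwise. -/
noncomputable def relEnt {E : Type*} [MeasurableSpace E] (μ γ : Measure E) : ℝ≥0∞ :=
  if μ ≪ γ ∧ Integrable (fun x => Real.log (μ.rnDeriv γ x).toReal) μ
  then ENNReal.ofReal (∫ x, Real.log (μ.rnDeriv γ x).toReal ∂μ)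
  else ∞

/-!
Subtracting the Gaussian second moments from both sides, the inequality becomes a statement about
Lebesgue measure: some coupling `π` of `μ` and `ν` satisfies
`h(μ) + h(ν) ≤ d log (2π) + ∫ ⟪x, y⟫ dπ`, where `h` is the differential entropy. This is proved by
induction on `d`.

On the positive half-line the monotone coupling gives the one-dimensional bound with the better
constant `log (π / 2)`; combined fiberwise with the induction hypothesis for the first `d - 1`
coordinates, it handles measures on a half-space. A general pair is cut into two pairs of pieces
by hyperplanes which split `μ` and `ν` in the same ratio, and the normal of the hyperplane
cutting `ν` is chosen along the means of the pieces of `μ`: then contragredient shears carry the two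
half-spaces to a common one while centering the pieces of `μ` in the tangential directions. The
cut costs at most `log 2` of entropy for each measure, and `log (π / 2) + 2 log 2 = log (2π)`.
-/

open Set Filter Topology
open ProbabilityTheory hiding stdGaussian

/-- The differential entropy `-∫ log (dμ/dx) dμ` of `μ`; the integral is meaningful for
`IsEntropyRegular` measures. -/
noncomputable def diffEntropy {E : Type*} [MeasureSpace E] (μ : Measure E) : ℝ :=
  -∫ x, llr μ volume x ∂μ

/-- The measures with finite second moment and finite differential entropy: those for which both
sides of the symmetrized Talagrand inequality in Lebesgue form are given by integrable
functions. -/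
structure IsEntropyRegular {E : Type*} [NormedAddCommGroup E] [MeasureSpace E]
    (μ : Measure E) : Prop where
  absolutelyContinuous : μ ≪ volume
  integrable_llr : Integrable (llr μ volume) μ
  memLp_id : MemLp id 2 μ

lemma llr_map_measurableEquiv {α β : Type*} [MeasureSpace α] [MeasureSpace β]
    [SigmaFinite (volume : Measure α)] {μ : Measure α} [SigmaFinite μ] {e : α ≃ᵐ β}
    (he : MeasurePreserving e) (hμ : μ ≪ volume) :
    (fun x ↦ llr (μ.map e) volume (e x)) =ᵐ[μ] llr μ volume := by
  have := e.measurableEmbedding.rnDeriv_map μ volume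
  rw [he.map_eq] at this
  filter_upwards [hμ.ae_le this] with x hx
  simp only [llr, hx]

lemma diffEntropy_map {α β : Type*} [MeasureSpace α] [MeasureSpace β]
    [SigmaFinite (volume : Measure α)] {μ : Measure α} [SigmaFinite μ] {e : α ≃ᵐ β}
    (he : MeasurePreserving e) (hμ : μ ≪ volume) : diffEntropy (μ.map e) = diffEntropy μ := by
  rw [diffEntropy, integral_map_equiv, integral_congr_ae (llr_map_measurableEquiv he hμ),
    diffEntropy]

lemma integral_cond {α E : Type*} [MeasurableSpace α] [NormedAddCommGroup E] [NormedSpace ℝ E]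
    {μ : Measure α} {s : Set α} (f : α → E) :
    ∫ x, f x ∂μ[|s] = (μ.real s)⁻¹ • ∫ x in s, f x ∂μ := by
  rw [ProbabilityTheory.cond, integral_smul_measure, toReal_inv, measureReal_def]

section Cond

variable {α : Type*} [MeasureSpace α] [SigmaFinite (volume : Measure α)]
  {μ : Measure α} {s : Set α}

lemma llr_cond [IsFiniteMeasure μ] (hμ : μ ≪ volume) (hs : MeasurableSet s) (h0 : μ s ≠ 0) :
    llr μ[|s] volume =ᵐ[μ[|s]] fun x ↦ llr μ volume x - Real.log (μ.real s) := by
  have hcond : μ[|s] ≪ μ.restrict s := Measure.smul_absolutelyContinuous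
  have hsμ : μ.restrict s ≪ μ := Measure.absolutelyContinuous_of_le Measure.restrict_le_self
  filter_upwards [hcond.ae_le (llr_smul_left (hsμ.trans hμ) (μ s)⁻¹ (by simp) (by simpa)),
    hcond.ae_le ((hsμ.trans hμ).ae_le (Measure.rnDeriv_restrict μ volume hs)),
    hcond.ae_le (ae_restrict_mem hs)] with x hllr hrestrict hx
  rw [ProbabilityTheory.cond, hllr, llr, hrestrict, indicator_of_mem hx, toReal_inv,
    Real.log_inv, llr, measureReal_def, sub_eq_add_neg]

lemma diffEntropy_cond [IsFiniteMeasure μ] (hμ : μ ≪ volume) (hint : Integrable (llr μ volume) μ)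
    (hs : MeasurableSet s) (h0 : μ s ≠ 0) :
    μ.real s * diffEntropy μ[|s] =
      -∫ x in s, llr μ volume x ∂μ + μ.real s * Real.log (μ.real s) := by
  have := cond_isProbabilityMeasure h0
  have hreal : μ.real s ≠ 0 := (measureReal_ne_zero_iff).2 h0
  have hint' : Integrable (llr μ volume) μ[|s] :=
    hint.restrict.smul_measure (by simpa)
  rw [diffEntropy, integral_congr_ae (llr_cond hμ hs h0),
    integral_sub hint' (integrable_const _), integral_cond, integral_const]
  simp only [probReal_univ, smul_eq_mul, one_mul]
  field_simp
  ring

lemma diffEntropy_eq_cond_add_cond_compl [IsProbabilityMeasure μ] (hμ : μ ≪ volume)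
    (hint : Integrable (llr μ volume) μ) (hs : MeasurableSet s) (h0 : μ s ≠ 0) (h1 : μ sᶜ ≠ 0) :
    diffEntropy μ = μ.real s * diffEntropy μ[|s] + μ.real sᶜ * diffEntropy μ[|sᶜ]
      + Real.binEntropy (μ.real s) := by
  rw [diffEntropy_cond hμ hint hs h0, diffEntropy_cond hμ hint hs.compl h1,
    probReal_compl_eq_one_sub hs, diffEntropy, ← integral_add_compl hs hint, Real.binEntropy,
    Real.log_inv, Real.log_inv]
  ring

end Cond

namespace IsEntropyRegular

section Basic

variable {E F : Type*} [NormedAddCommGroup E] [MeasureSpace E]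
  [NormedAddCommGroup F] [MeasureSpace F] {μ : Measure E}

lemma integrable_id [IsFiniteMeasure μ] (hμ : IsEntropyRegular μ) : Integrable (fun x ↦ x) μ :=
  hμ.memLp_id.integrable one_le_two

lemma map [SigmaFinite (volume : Measure E)] [OpensMeasurableSpace F]
    [SecondCountableTopology F] [SigmaFinite μ] (hμ : IsEntropyRegular μ) {e : E ≃ᵐ F}
    (he : MeasurePreserving e) (h2 : MemLp e 2 μ) : IsEntropyRegular (μ.map e) where
  absolutelyContinuous := he.map_eq ▸ hμ.absolutelyContinuous.map e.measurable
  integrable_llr := by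
    rw [integrable_map_equiv]
    exact hμ.integrable_llr.congr (llr_map_measurableEquiv he hμ.absolutelyContinuous).symm
  memLp_id := (memLp_map_measure_iff measurable_id.aestronglyMeasurable
    e.measurable.aemeasurable).2 h2

lemma cond [SigmaFinite (volume : Measure E)] [IsFiniteMeasure μ] (hμ : IsEntropyRegular μ)
    {s : Set E} (hs : MeasurableSet s) (h0 : μ s ≠ 0) : IsEntropyRegular μ[|s] where
  absolutelyContinuous := cond_absolutelyContinuous.trans hμ.absolutelyContinuous
  integrable_llr := by
    have := cond_isProbabilityMeasure h0
    refine Integrable.congr (.sub ?_ (integrable_const _))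
      (llr_cond hμ.absolutelyContinuous hs h0).symm
    exact hμ.integrable_llr.restrict.smul_measure (by simpa)
  memLp_id := (hμ.memLp_id.restrict s).smul_measure (by simpa)

end Basic

end IsEntropyRegular

lemma tilted_prod_tilted {α β : Type*} [MeasurableSpace α] [MeasurableSpace β]
    {μ : Measure α} {ν : Measure β} [SFinite μ] [SFinite ν] {f : α → ℝ} {g : β → ℝ}
    (hf : AEMeasurable f μ) (hg : AEMeasurable g ν) :
    (μ.tilted f).prod (ν.tilted g) = (μ.prod ν).tilted fun p ↦ f p.1 + g p.2 := by
  simp only [Measure.tilted, Real.exp_add]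
  rw [prod_withDensity₀ (by fun_prop) (by fun_prop),
    integral_prod_mul (fun x ↦ Real.exp (f x)) (fun y ↦ Real.exp (g y))]
  congr with p
  rw [← ENNReal.ofReal_mul (div_nonneg (Real.exp_pos _).le
    (integral_nonneg fun _ ↦ (Real.exp_pos _).le)), div_mul_div_comm]

section KernelChainRule

variable {α β : Type*} [MeasurableSpace α] [MeasurableSpace β]
  [MeasurableSpace.CountableOrCountablyGenerated α β] {μ μ₀ : Measure α} {ν₀ : Measure β}
  {κ η : Kernel α β}

lemma llr_compProd_right_ae [IsFiniteMeasure μ] [IsFiniteKernel κ] [IsFiniteKernel η]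
    (h : ∀ᵐ a ∂μ, κ a ≪ η a) :
    ∀ᵐ a ∂μ, (fun b ↦ llr (μ ⊗ₘ κ) (μ ⊗ₘ η) (a, b)) =ᵐ[κ a] llr (κ a) (η a) := by
  have hκ : μ ⊗ₘ κ = (μ ⊗ₘ η).withDensity fun p ↦ κ.rnDeriv η p.1 p.2 := by
    rw [← Measure.compProd_withDensity (Kernel.measurable_rnDeriv κ η)]
    refine Measure.compProd_congr ?_
    filter_upwards [h] with a ha using (Kernel.withDensity_rnDeriv_eq ha).symm
  have hrn : (μ ⊗ₘ κ).rnDeriv (μ ⊗ₘ η) =ᵐ[μ ⊗ₘ η] fun p ↦ κ.rnDeriv η p.1 p.2 := by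
    rw [hκ]
    exact Measure.rnDeriv_withDensity _ (Kernel.measurable_rnDeriv κ η)
  filter_upwards [h, Measure.ae_ae_of_ae_compProd hrn] with a ha hrna
  filter_upwards [ha.ae_le hrna, ha.ae_le (Kernel.rnDeriv_eq_rnDeriv_measure (κ := κ))]
    with b hb hb'
  simp only [llr, hb, hb']

variable [IsProbabilityMeasure μ] [IsFiniteMeasure μ₀] [IsProbabilityMeasure ν₀]
  [IsMarkovKernel κ]

lemma compProd_absolutelyContinuous_prod_iff :
    μ ⊗ₘ κ ≪ μ₀.prod ν₀ ↔ μ ≪ μ₀ ∧ ∀ᵐ a ∂μ, κ a ≪ ν₀ := by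
  rw [← Measure.compProd_const, Measure.absolutelyContinuous_compProd_iff']
  simp only [Kernel.const_apply]

lemma integrable_llr_compProd_prod (h_ac : μ ⊗ₘ κ ≪ μ₀.prod ν₀)
    (h_int : Integrable (llr (μ ⊗ₘ κ) (μ₀.prod ν₀)) (μ ⊗ₘ κ)) :
    Integrable (llr μ μ₀) μ ∧ (∀ᵐ a ∂μ, Integrable (llr (κ a) ν₀) (κ a)) ∧
      Integrable (fun a ↦ ∫ b, llr (κ a) ν₀ b ∂κ a) μ := by
  have hκ := (compProd_absolutelyContinuous_prod_iff.1 h_ac).2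
  rw [← Measure.compProd_const] at h_ac h_int
  obtain ⟨hμ, hcond⟩ := (InformationTheory.integrable_llr_compProd_iff h_ac).1 h_int
  have hllr := llr_compProd_right_ae (η := Kernel.const α ν₀) hκ
  refine ⟨hμ, ?_, (Integrable.integral_compProd hcond).congr ?_⟩
  · filter_upwards [hllr, ((Measure.integrable_compProd_iff hcond.1).1 hcond).1] with a ha hint
    exact hint.congr ha
  · filter_upwards [hllr] with a ha using integral_congr_ae ha

lemma integral_llr_compProd_prod (h_ac : μ ⊗ₘ κ ≪ μ₀.prod ν₀)
    (h_int : Integrable (llr (μ ⊗ₘ κ) (μ₀.prod ν₀)) (μ ⊗ₘ κ)) :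
    ∫ p, llr (μ ⊗ₘ κ) (μ₀.prod ν₀) p ∂(μ ⊗ₘ κ) =
      ∫ a, llr μ μ₀ a ∂μ + ∫ a, ∫ b, llr (κ a) ν₀ b ∂κ a ∂μ := by
  have hκ := (compProd_absolutelyContinuous_prod_iff.1 h_ac).2
  rw [← Measure.compProd_const] at h_ac h_int ⊢
  have hcond := ((InformationTheory.integrable_llr_compProd_iff h_ac).1 h_int).2
  rw [InformationTheory.integral_llr_compProd_eq_add h_ac h_int,
    Measure.integral_compProd hcond]
  congr 1
  refine integral_congr_ae ?_
  filter_upwards [llr_compProd_right_ae (η := Kernel.const α ν₀) hκ] with a ha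
    using integral_congr_ae ha

end KernelChainRule

/-- The Gaussian probability measure with density proportional to `exp (-‖x‖² / 2)`. It serves as
a finite reference measure, relative to which entropies of second-order measures are bounded
below. -/
noncomputable def normGaussian (E : Type*) [NormedAddCommGroup E] [MeasureSpace E] : Measure E :=
  volume.tilted fun x ↦ -‖x‖ ^ 2 / 2

section NormGaussian

variable {E : Type*} [NormedAddCommGroup E] [MeasureSpace E] {μ : Measure E}

instance : IsZeroOrProbabilityMeasure (normGaussian E) :=
  isZeroOrProbabilityMeasure_tilted

lemma isProbabilityMeasure_normGaussian [NeZero (volume : Measure E)]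
    (hE : Integrable fun x : E ↦ Real.exp (-‖x‖ ^ 2 / 2)) :
    IsProbabilityMeasure (normGaussian E) :=
  isProbabilityMeasure_tilted hE

lemma integrable_neg_norm_sq_div_two (h2 : MemLp id 2 μ) :
    Integrable (fun x ↦ -‖x‖ ^ 2 / 2) μ :=
  (h2.integrable_norm_pow two_ne_zero).neg.div_const 2

variable [SigmaFinite (volume : Measure E)]

lemma isEntropyRegular_of_normGaussian [IsProbabilityMeasure μ]
    (hE : Integrable fun x : E ↦ Real.exp (-‖x‖ ^ 2 / 2)) (hμ : μ ≪ normGaussian E)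
    (hint : Integrable (llr μ (normGaussian E)) μ) (h2 : MemLp id 2 μ) : IsEntropyRegular μ := by
  have hvol := hμ.trans (tilted_absolutelyContinuous _ _)
  refine ⟨hvol, ?_, h2⟩
  have hconst := integrable_const (μ := μ) (Real.log (∫ z : E, Real.exp (-‖z‖ ^ 2 / 2)))
  refine (hint.sub ((integrable_neg_norm_sq_div_two h2).neg.add hconst)).congr ?_
  filter_upwards [llr_tilted_right hvol hE] with x hx
  simp only [normGaussian, Pi.sub_apply, Pi.add_apply, Pi.neg_apply, hx]
  ring

lemma IsEntropyRegular.integral_llr_normGaussian [IsProbabilityMeasure μ]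
    (hμ : IsEntropyRegular μ) (hE : Integrable fun x : E ↦ Real.exp (-‖x‖ ^ 2 / 2)) :
    ∫ x, llr μ (normGaussian E) x ∂μ = -diffEntropy μ - ∫ x, -‖x‖ ^ 2 / 2 ∂μ
      + Real.log (∫ x : E, Real.exp (-‖x‖ ^ 2 / 2)) := by
  rw [normGaussian, integral_llr_tilted_right hμ.absolutelyContinuous
    (integrable_neg_norm_sq_div_two hμ.memLp_id) hE hμ.integrable_llr, diffEntropy, neg_neg]

end NormGaussian

section ProductMoments

variable {E G : Type*} [NormedAddCommGroup E] [MeasurableSpace E] [NormedAddCommGroup G]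
  [MeasurableSpace G] {ρ : Measure (E × G)}

lemma memLp_id_fst [OpensMeasurableSpace E] [SecondCountableTopology E] (hρ : MemLp id 2 ρ) :
    MemLp id 2 ρ.fst :=
  (memLp_map_measure_iff measurable_id.aestronglyMeasurable measurable_fst.aemeasurable).2
    (hρ.of_le measurable_fst.aestronglyMeasurable (ae_of_all _ norm_fst_le))

lemma integrable_neg_norm_fst_sq [OpensMeasurableSpace E] [SecondCountableTopology E]
    (hρ : MemLp id 2 ρ) : Integrable (fun p : E × G ↦ -‖p.1‖ ^ 2 / 2) ρ :=
  ((hρ.of_le measurable_fst.aestronglyMeasurable (ae_of_all _ norm_fst_le)).integrable_norm_pow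
    two_ne_zero).neg.div_const 2

variable [OpensMeasurableSpace G] [SecondCountableTopology G]

lemma memLp_snd_of_memLp_id (hρ : MemLp id 2 ρ) : MemLp Prod.snd 2 ρ :=
  hρ.of_le measurable_snd.aestronglyMeasurable (ae_of_all _ norm_snd_le)

lemma integrable_neg_norm_snd_sq (hρ : MemLp id 2 ρ) :
    Integrable (fun p : E × G ↦ -‖p.2‖ ^ 2 / 2) ρ :=
  ((memLp_snd_of_memLp_id hρ).integrable_norm_pow two_ne_zero).neg.div_const 2

lemma memLp_id_condKernel_ae [StandardBorelSpace G] [IsFiniteMeasure ρ]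
    (hρ : MemLp id 2 ρ) : ∀ᵐ x ∂ρ.fst, MemLp id 2 (ρ.condKernel x) := by
  filter_upwards [((memLp_snd_of_memLp_id hρ).integrable_norm_pow two_ne_zero).condKernel_ae]
    with x hx
  exact (memLp_two_iff_integrable_sq_norm measurable_id.aestronglyMeasurable).2 hx

end ProductMoments

section ChainRule

variable {E G : Type*} [NormedAddCommGroup E] [MeasureSpace E] [NormedAddCommGroup G]
  [MeasureSpace G] {ρ : Measure (E × G)}

lemma normGaussian_prod_normGaussian [SFinite (volume : Measure E)]
    [SFinite (volume : Measure G)] [OpensMeasurableSpace E] [OpensMeasurableSpace G] :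
    (normGaussian E).prod (normGaussian G) =
      volume.tilted fun p : E × G ↦ -‖p.1‖ ^ 2 / 2 + -‖p.2‖ ^ 2 / 2 := by
  rw [normGaussian, normGaussian, tilted_prod_tilted (by fun_prop) (by fun_prop),
    Measure.volume_eq_prod]

variable (hE : Integrable fun x : E ↦ Real.exp (-‖x‖ ^ 2 / 2))
  (hG : Integrable fun y : G ↦ Real.exp (-‖y‖ ^ 2 / 2))
include hE hG

lemma integrable_exp_neg_norm_sq_prod :
    Integrable fun p : E × G ↦ Real.exp (-‖p.1‖ ^ 2 / 2 + -‖p.2‖ ^ 2 / 2) := by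
  simpa only [Real.exp_add, Measure.volume_eq_prod] using hE.mul_prod hG

namespace IsEntropyRegular

lemma absolutelyContinuous_normGaussian_prod (hρ : IsEntropyRegular ρ) :
    ρ ≪ (normGaussian E).prod (normGaussian G) := by
  refine hρ.absolutelyContinuous.trans ?_
  rw [Measure.volume_eq_prod]
  exact (absolutelyContinuous_tilted hE).prod (absolutelyContinuous_tilted hG)

variable [SigmaFinite (volume : Measure E)] [SigmaFinite (volume : Measure G)]
  [OpensMeasurableSpace E] [OpensMeasurableSpace G]
  [SecondCountableTopology E] [SecondCountableTopology G] [IsProbabilityMeasure ρ]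

lemma integrable_llr_normGaussian_prod (hρ : IsEntropyRegular ρ) :
    Integrable (llr ρ ((normGaussian E).prod (normGaussian G))) ρ := by
  rw [normGaussian_prod_normGaussian]
  exact integrable_llr_tilted_right hρ.absolutelyContinuous
    ((integrable_neg_norm_fst_sq hρ.memLp_id).add (integrable_neg_norm_snd_sq hρ.memLp_id))
    hρ.integrable_llr (integrable_exp_neg_norm_sq_prod hE hG)

lemma integral_llr_normGaussian_prod (hρ : IsEntropyRegular ρ) :
    ∫ p, llr ρ ((normGaussian E).prod (normGaussian G)) p ∂ρ =
      -diffEntropy ρ - (∫ p, -‖p.1‖ ^ 2 / 2 ∂ρ + ∫ p, -‖p.2‖ ^ 2 / 2 ∂ρ)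
        + (Real.log (∫ x : E, Real.exp (-‖x‖ ^ 2 / 2))
          + Real.log (∫ y : G, Real.exp (-‖y‖ ^ 2 / 2))) := by
  have hfst := integrable_neg_norm_fst_sq hρ.memLp_id
  have hsnd := integrable_neg_norm_snd_sq hρ.memLp_id
  have : NeZero (volume : Measure (E × G)) := ⟨fun h ↦ IsProbabilityMeasure.ne_zero ρ
    (Measure.absolutelyContinuous_zero_iff.1 (h ▸ hρ.absolutelyContinuous))⟩
  have hmass := integral_prod_mul (μ := volume) (ν := volume)
    (fun x : E ↦ Real.exp (-‖x‖ ^ 2 / 2)) (fun y : G ↦ Real.exp (-‖y‖ ^ 2 / 2))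
  simp only [← Real.exp_add, ← Measure.volume_eq_prod] at hmass
  have hllr := integral_llr_tilted_right hρ.absolutelyContinuous (hfst.add hsnd)
    (integrable_exp_neg_norm_sq_prod hE hG) hρ.integrable_llr
  simp only [Pi.add_apply] at hllr
  have hpos := integral_exp_pos (integrable_exp_neg_norm_sq_prod hE hG)
  rw [hmass] at hpos
  rw [normGaussian_prod_normGaussian]
  refine hllr.trans ?_
  rw [hmass, Real.log_mul (left_ne_zero_of_mul hpos.ne') (right_ne_zero_of_mul hpos.ne'),
    integral_add hfst hsnd, diffEntropy, neg_neg]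

variable [StandardBorelSpace G]

lemma absolutelyContinuous_and_integrable_llr_compProd (hρ : IsEntropyRegular ρ) :
    ρ.fst ⊗ₘ ρ.condKernel ≪ (normGaussian E).prod (normGaussian G) ∧
      Integrable (llr (ρ.fst ⊗ₘ ρ.condKernel) ((normGaussian E).prod (normGaussian G)))
        (ρ.fst ⊗ₘ ρ.condKernel) := by
  rw [ρ.disintegrate ρ.condKernel]
  exact ⟨hρ.absolutelyContinuous_normGaussian_prod hE hG,
    hρ.integrable_llr_normGaussian_prod hE hG⟩

variable [NeZero (volume : Measure G)]

protected lemma fst (hρ : IsEntropyRegular ρ) : IsEntropyRegular ρ.fst := by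
  have := isProbabilityMeasure_normGaussian hG
  obtain ⟨hac, hint⟩ := hρ.absolutelyContinuous_and_integrable_llr_compProd hE hG
  exact isEntropyRegular_of_normGaussian hE (compProd_absolutelyContinuous_prod_iff.1 hac).1
    (integrable_llr_compProd_prod hac hint).1 (memLp_id_fst hρ.memLp_id)

lemma condKernel_ae (hρ : IsEntropyRegular ρ) :
    ∀ᵐ x ∂ρ.fst, IsEntropyRegular (ρ.condKernel x) := by
  have := isProbabilityMeasure_normGaussian hG
  obtain ⟨hac, hint⟩ := hρ.absolutelyContinuous_and_integrable_llr_compProd hE hG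
  filter_upwards [(compProd_absolutelyContinuous_prod_iff.1 hac).2,
    (integrable_llr_compProd_prod hac hint).2.1, memLp_id_condKernel_ae hρ.memLp_id]
    with x hx hllr h2 using isEntropyRegular_of_normGaussian hG hx hllr h2

lemma diffEntropy_condKernel_ae (hρ : IsEntropyRegular ρ) :
    ∀ᵐ x ∂ρ.fst, diffEntropy (ρ.condKernel x) =
      Real.log (∫ y : G, Real.exp (-‖y‖ ^ 2 / 2)) - ∫ y, -‖y‖ ^ 2 / 2 ∂ρ.condKernel x
        - ∫ y, llr (ρ.condKernel x) (normGaussian G) y ∂ρ.condKernel x := by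
  filter_upwards [hρ.condKernel_ae hE hG] with x hx
  rw [hx.integral_llr_normGaussian hG]
  ring

lemma integrable_diffEntropy_condKernel (hρ : IsEntropyRegular ρ) :
    Integrable (fun x ↦ diffEntropy (ρ.condKernel x)) ρ.fst := by
  have := isProbabilityMeasure_normGaussian hG
  obtain ⟨hac, hint⟩ := hρ.absolutelyContinuous_and_integrable_llr_compProd hE hG
  have hsq := (integrable_neg_norm_snd_sq hρ.memLp_id).integral_condKernel
  exact (((integrable_const _).sub hsq).sub (integrable_llr_compProd_prod hac hint).2.2).congr
    ((hρ.diffEntropy_condKernel_ae hE hG).mono fun x hx ↦ hx.symm)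

lemma diffEntropy_eq_fst_add_integral_condKernel (hρ : IsEntropyRegular ρ) :
    diffEntropy ρ = diffEntropy ρ.fst + ∫ x, diffEntropy (ρ.condKernel x) ∂ρ.fst := by
  have := isProbabilityMeasure_normGaussian hG
  have hρ_llr := hρ.integral_llr_normGaussian_prod hE hG
  obtain ⟨hac, hint⟩ := hρ.absolutelyContinuous_and_integrable_llr_compProd hE hG
  have hchain := integral_llr_compProd_prod hac hint
  have hfst := integrable_neg_norm_fst_sq hρ.memLp_id
  have hsnd := integrable_neg_norm_snd_sq hρ.memLp_id
  rw [ρ.disintegrate ρ.condKernel, (hρ.fst hE hG).integral_llr_normGaussian hE,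
    Measure.fst, integral_map measurable_fst.aemeasurable (by fun_prop), ← Measure.fst] at hchain
  have hdiff : Integrable (fun x ↦ Real.log (∫ y : G, Real.exp (-‖y‖ ^ 2 / 2))
      - ∫ y, -‖y‖ ^ 2 / 2 ∂ρ.condKernel x) ρ.fst :=
    (integrable_const _).sub hsnd.integral_condKernel
  rw [integral_congr_ae (hρ.diffEntropy_condKernel_ae hE hG),
    integral_sub hdiff (integrable_llr_compProd_prod hac hint).2.2,
    integral_sub (integrable_const _) hsnd.integral_condKernel, integral_const, probReal_univ,
    one_smul, Measure.integral_condKernel hsnd]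
  linarith

end IsEntropyRegular

end ChainRule

section Quantile

/-- The quantile function of a measure on the line, extended by zero outside `(0, 1)`; it is the
monotone transport map from the uniform law on `(0, 1)`. -/
noncomputable def quantile (α : Measure ℝ) (u : ℝ) : ℝ :=
  open Classical in if u ∈ Ioo (0 : ℝ) 1 then sInf {t | u ≤ cdf α t} else 0

variable {α β : Measure ℝ} {u : ℝ}

lemma quantile_le_iff (α : Measure ℝ) (hu : u ∈ Ioo (0 : ℝ) 1) (t : ℝ) :
    quantile α u ≤ t ↔ u ≤ cdf α t := by
  have hne : {t | u ≤ cdf α t}.Nonempty :=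
    ((tendsto_cdf_atTop α).eventually (lt_mem_nhds hu.2)).exists.imp fun _ h ↦ le_of_lt h
  have hbdd : BddBelow {t | u ≤ cdf α t} := by
    obtain ⟨b, hb⟩ := ((tendsto_cdf_atBot α).eventually (gt_mem_nhds hu.1)).exists
    exact ⟨b, fun t ht ↦ le_of_not_gt fun h ↦
      lt_irrefl u (ht.trans_lt ((monotone_cdf α h.le).trans_lt hb))⟩
  rw [quantile, if_pos hu]
  refine ⟨fun h ↦ ?_, fun h ↦ csInf_le hbdd h⟩
  have hlim : Tendsto (cdf α) (𝓝[>] t) (𝓝 (cdf α t)) :=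
    ((cdf α).right_continuous t).mono_left (nhdsWithin_mono _ Ioi_subset_Ici_self)
  refine ge_of_tendsto hlim ?_
  filter_upwards [self_mem_nhdsWithin] with s hs
  obtain ⟨r, hr, hrs⟩ := exists_lt_of_csInf_lt hne (h.trans_lt hs)
  exact le_trans hr (monotone_cdf α hrs.le)

lemma monotoneOn_quantile (α : Measure ℝ) : MonotoneOn (quantile α) (Ioo 0 1) := by
  intro u hu v hv huv
  rw [quantile_le_iff α hu]
  exact huv.trans ((quantile_le_iff α hv _).1 le_rfl)

lemma quantile_pos [IsProbabilityMeasure α] (hα : α (Iic 0) = 0) (hu : u ∈ Ioo (0 : ℝ) 1) :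
    0 < quantile α u := by
  by_contra! h
  rw [quantile_le_iff α hu, cdf_eq_real, measureReal_def, hα, toReal_zero] at h
  exact hu.1.not_ge h

lemma measurable_quantile_kernel {E : Type*} [MeasurableSpace E] (κ : Kernel E ℝ)
    [IsMarkovKernel κ] : Measurable fun p : E × ℝ ↦ quantile (κ p.1) p.2 := by
  refine measurable_of_Iic fun t ↦ ?_
  have hcdf : Measurable fun p : E × ℝ ↦ cdf (κ p.1) t := by
    simp_rw [cdf_eq_real]
    exact ((κ.measurable_coe measurableSet_Iic).comp measurable_fst).ennreal_toReal
  have hpreimage : (fun p : E × ℝ ↦ quantile (κ p.1) p.2) ⁻¹' Iic t =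
      (Prod.snd ⁻¹' Ioo (0 : ℝ) 1).ite {p | p.2 ≤ cdf (κ p.1) t} {_p | 0 ≤ t} := by
    ext p
    by_cases hp : p.2 ∈ Ioo (0 : ℝ) 1
    · simp [Set.ite, hp, quantile_le_iff _ hp, -mem_Ioo]
    · simp [Set.ite, hp, quantile, -mem_Ioo]
  rw [hpreimage]
  exact (measurable_snd measurableSet_Ioo).ite (measurableSet_le measurable_snd hcdf)
    (MeasurableSet.const _)

lemma measurable_quantile (α : Measure ℝ) [IsProbabilityMeasure α] : Measurable (quantile α) :=
  (measurable_quantile_kernel (Kernel.const Unit α)).comp (measurable_prodMk_left (x := ()))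

lemma isProbabilityMeasure_restrict_Ioo_zero_one :
    IsProbabilityMeasure ((volume : Measure ℝ).restrict (Ioo 0 1)) := ⟨by simp⟩

lemma map_quantile (α : Measure ℝ) [IsProbabilityMeasure α] :
    (volume.restrict (Ioo (0 : ℝ) 1)).map (quantile α) = α := by
  have := isProbabilityMeasure_restrict_Ioo_zero_one
  have hm := measurable_quantile α
  have := Measure.isProbabilityMeasure_map (μ := volume.restrict (Ioo (0 : ℝ) 1)) hm.aemeasurable
  refine Measure.ext_of_Iic _ _ fun t ↦ ?_
  have hpreimage : quantile α ⁻¹' Iic t ∩ Ioo 0 1 = Ioo 0 1 ∩ Iic (cdf α t) := by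
    ext u
    rw [inter_comm]
    exact and_congr_right fun hu ↦ quantile_le_iff α hu t
  rw [Measure.map_apply hm measurableSet_Iic, Measure.restrict_apply (hm measurableSet_Iic),
    ← ofReal_cdf, hpreimage]
  apply le_antisymm
  · calc volume (Ioo 0 1 ∩ Iic (cdf α t)) ≤ volume (Icc 0 (cdf α t)) :=
        measure_mono fun u hu ↦ ⟨hu.1.1.le, hu.2⟩
      _ = ENNReal.ofReal (cdf α t) := by simp
  · calc ENNReal.ofReal (cdf α t) = volume (Ioo 0 (cdf α t)) := by simp
      _ ≤ volume (Ioo 0 1 ∩ Iic (cdf α t)) := measure_mono fun u hu ↦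
        ⟨⟨hu.1, hu.2.trans_le (cdf_le_one α t)⟩, hu.2.le⟩

lemma integral_comp_quantile (α : Measure ℝ) [IsProbabilityMeasure α] {f : ℝ → ℝ}
    (hf : AEStronglyMeasurable f α) : ∫ u in Ioo (0 : ℝ) 1, f (quantile α u) = ∫ t, f t ∂α := by
  conv_rhs => rw [← map_quantile α]
  exact (integral_map (measurable_quantile α).aemeasurable (by rwa [map_quantile])).symm

lemma cdf_quantile (α : Measure ℝ) [IsProbabilityMeasure α] [NullSingletonClass α]
    (hu : u ∈ Ioo (0 : ℝ) 1) : cdf α (quantile α u) = u := by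
  refine le_antisymm ?_ ((quantile_le_iff α hu _).1 le_rfl)
  have hatom : (cdf α).measure {quantile α u} = 0 := by
    rw [measure_cdf]; exact measure_singleton _
  rw [StieltjesFunction.measure_singleton, ENNReal.ofReal_eq_zero, sub_nonpos] at hatom
  refine hatom.trans (le_of_tendsto ((monotone_cdf α).tendsto_leftLim _) ?_)
  filter_upwards [self_mem_nhdsWithin] with s hs
  by_contra! hlt
  exact (not_lt.2 ((quantile_le_iff α hu s).2 hlt.le)) hs

-- Differentiate `cdf α (quantile α u) = u`: the derivative of `cdf α` is the density of `α`.
lemma ae_hasDerivAt_quantile [IsProbabilityMeasure α] (hα : α ≪ volume) :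
    ∀ᵐ u ∂volume.restrict (Ioo (0 : ℝ) 1),
      HasDerivAt (quantile α) (Real.exp (-llr α volume (quantile α u))) u := by
  have : NullSingletonClass α := ⟨fun x ↦ hα (measure_singleton x)⟩
  have hcdf : ∀ᵐ t ∂α, HasDerivAt (cdf α) (Real.exp (llr α volume t)) t := by
    filter_upwards [hα.ae_le (cdf α).ae_hasDerivAt, exp_llr_of_ac α volume hα] with t ht hexp
    rwa [hexp, ← congrArg (Measure.rnDeriv · volume t) (measure_cdf α)]
  rw [← map_quantile α] at hcdf
  have hcdf_quantile := ae_of_ae_map (measurable_quantile α).aemeasurable hcdf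
  rw [map_quantile] at hcdf_quantile
  filter_upwards [hcdf_quantile,
    (monotoneOn_quantile α).ae_differentiableWithinAt measurableSet_Ioo,
    ae_restrict_mem measurableSet_Ioo] with u hcdf hdiff hu
  have hquantile := (hdiff.differentiableAt (Ioo_mem_nhds hu.1 hu.2)).hasDerivAt
  have hid : HasDerivAt (fun u ↦ cdf α (quantile α u)) 1 u := by
    refine (hasDerivAt_id u).congr_of_eventuallyEq ?_
    filter_upwards [Ioo_mem_nhds hu.1 hu.2] with v hv
    exact cdf_quantile α hv
  have hmul := (hcdf.comp u hquantile).unique hid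
  rwa [Real.exp_neg, ← eq_inv_of_mul_eq_one_right hmul]

end Quantile

section HalfNormal

/-- The distribution function of the half-normal law, on `[0, ∞)`. -/
noncomputable def halfNormalCDF (w : ℝ) : ℝ :=
  ∫ t in (0 : ℝ)..w, √(2 / Real.pi) * Real.exp (-t ^ 2 / 2)

lemma hasDerivAt_halfNormalCDF (w : ℝ) :
    HasDerivAt halfNormalCDF (√(2 / Real.pi) * Real.exp (-w ^ 2 / 2)) w := by
  have hc : Continuous fun t : ℝ ↦ √(2 / Real.pi) * Real.exp (-t ^ 2 / 2) := by fun_prop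
  exact intervalIntegral.integral_hasDerivAt_right (hc.intervalIntegrable _ _)
    (hc.stronglyMeasurableAtFilter _ _) hc.continuousAt

lemma monotone_halfNormalCDF : Monotone halfNormalCDF :=
  monotone_of_hasDerivAt_nonneg hasDerivAt_halfNormalCDF fun _ ↦ by positivity

lemma halfNormalCDF_mem_Icc {w : ℝ} (hw : 0 ≤ w) : halfNormalCDF w ∈ Icc (0 : ℝ) 1 := by
  refine ⟨intervalIntegral.integral_nonneg hw fun _ _ ↦ by positivity, ?_⟩
  have hfun : (fun t : ℝ ↦ √(2 / Real.pi) * Real.exp (-t ^ 2 / 2)) =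
      fun t ↦ √(2 / Real.pi) * Real.exp (-(1 / 2) * t ^ 2) := by
    funext t; congr 2; ring
  have hint : Integrable fun t : ℝ ↦ √(2 / Real.pi) * Real.exp (-(1 / 2) * t ^ 2) :=
    (integrable_exp_neg_mul_sq (by norm_num)).const_mul _
  have htotal : ∫ t in Ioi (0 : ℝ), √(2 / Real.pi) * Real.exp (-(1 / 2) * t ^ 2) = 1 := by
    rw [integral_const_mul, integral_gaussian_Ioi, ← mul_div_assoc,
      ← Real.sqrt_mul (by positivity), show 2 / Real.pi * (Real.pi / (1 / 2)) = 2 ^ 2 by field_simp,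
      Real.sqrt_sq zero_le_two, div_self two_ne_zero]
  rw [halfNormalCDF, intervalIntegral.integral_of_le hw, hfun]
  refine (?_ : _ ≤ _).trans_eq htotal
  exact setIntegral_mono_set hint.integrableOn (ae_of_all _ fun _ ↦ by positivity)
    (Ioc_subset_Ioi_self : Ioc 0 w ⊆ Ioi 0).eventuallyLE

end HalfNormal

section Comonotone

lemma setIntegral_deriv_le_of_monotoneOn {f : ℝ → ℝ} {a b m M : ℝ} (hab : a < b)
    (hf : MonotoneOn f (Ioo a b)) (hfm : MapsTo f (Ioo a b) (Icc m M)) :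
    IntegrableOn (deriv f) (Ioo a b) ∧ ∫ u in Ioo a b, deriv f u ≤ M - m := by
  obtain ⟨g, hg, hfg⟩ := hf.exists_monotone_extension
    ⟨m, by rintro _ ⟨u, hu, rfl⟩; exact (hfm hu).1⟩ ⟨M, by rintro _ ⟨u, hu, rfl⟩; exact (hfm hu).2⟩
  have hmM : m ≤ M := by
    obtain ⟨u, hu⟩ := nonempty_Ioo.2 hab
    exact (hfm hu).1.trans (hfm hu).2
  let G : ℝ → ℝ := fun u ↦ max m (min M (g u))
  have hG : MonotoneOn G (uIcc a b) := fun u _ v _ huv ↦ max_le_max_left _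
    (min_le_min_left _ (hg huv))
  have hfG : EqOn f G (Ioo a b) := fun u hu ↦ by
    simp only [G, ← hfg hu, min_eq_right (hfm hu).2, max_eq_right (hfm hu).1]
  have hderiv : EqOn (deriv G) (deriv f) (Ioo a b) := (hfG.symm.deriv isOpen_Ioo)
  constructor
  · exact ((intervalIntegrable_iff_integrableOn_Ioo_of_le hab.le).1
      hG.intervalIntegrable_deriv).congr_fun hderiv measurableSet_Ioo
  · rw [← setIntegral_congr_fun measurableSet_Ioo hderiv, ← integral_Ioc_eq_integral_Ioo,
      ← intervalIntegral.integral_of_le hab.le]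
    have hGab : G b - G a ≤ M - m :=
      sub_le_sub (max_le hmM (min_le_left _ _)) (le_max_left _ _)
    have hmem := hG.intervalIntegral_deriv_mem_uIcc
    rw [uIcc_of_le (sub_nonneg.2 (hG left_mem_uIcc right_mem_uIcc hab.le))] at hmem
    exact hmem.2.trans hGab

-- The product `D` on the right satisfies `D² ≥ (2/π) exp (-QR) q r` by AM-GM; take logarithms and
-- use `log D ≤ D - 1`.
lemma log_add_log_le_of_pos {Q R q r : ℝ} (hQ : 0 < Q) (hR : 0 < R) (hq : 0 < q) (hr : 0 < r) :
    Real.log q + Real.log r ≤ Real.log (Real.pi / 2) + Q * R +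
      2 * (√(2 / Real.pi) * Real.exp (-(√(Q * R)) ^ 2 / 2) *
        ((q * R + Q * r) / (2 * √(Q * R))) - 1) := by
  have hQR : 0 < Q * R := mul_pos hQ hR
  set D := √(2 / Real.pi) * Real.exp (-(√(Q * R)) ^ 2 / 2) *
        ((q * R + Q * r) / (2 * √(Q * R))) with hD
  have hDpos : 0 < D := by positivity
  have hDsq : D ^ 2 = 2 / Real.pi * Real.exp (-(Q * R)) *
      ((q * R + Q * r) ^ 2 / (4 * (Q * R))) := by
    rw [hD, mul_pow, mul_pow, div_pow, mul_pow, Real.sq_sqrt hQR.le,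
      Real.sq_sqrt (by positivity), ← Real.exp_nat_mul]
    congr 3
    · push_cast; ring_nf
    · norm_num
  have hamgm : q * r ≤ (q * R + Q * r) ^ 2 / (4 * (Q * R)) := by
    rw [le_div_iff₀ (by positivity)]
    linarith [sq_nonneg (q * R - Q * r)]
  have hlog : Real.log (2 / Real.pi * Real.exp (-(Q * R)) * (q * r)) ≤ 2 * Real.log D := by
    rw [← Nat.cast_ofNat, ← Real.log_pow, hDsq]
    exact Real.log_le_log (by positivity) (mul_le_mul_of_nonneg_left hamgm (by positivity))
  rw [Real.log_mul (by positivity) (by positivity), Real.log_mul (by positivity) (by positivity),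
    Real.log_exp, Real.log_mul hq.ne' hr.ne', ← inv_div, Real.log_inv] at hlog
  linarith [Real.log_le_sub_one_of_pos hDpos]

variable {α β : Measure ℝ} [IsProbabilityMeasure α] [IsProbabilityMeasure β]

lemma setIntegral_deriv_halfNormalCDF_quantile_le (hα0 : α (Iic 0) = 0) (hβ0 : β (Iic 0) = 0) :
    IntegrableOn (deriv fun u ↦ halfNormalCDF √(quantile α u * quantile β u)) (Ioo 0 1) ∧
      ∫ u in Ioo 0 1, deriv (fun u ↦ halfNormalCDF √(quantile α u * quantile β u)) u ≤ 1 := by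
  rw [← sub_zero (1 : ℝ)]
  refine setIntegral_deriv_le_of_monotoneOn (by simp) ?_
    fun u _ ↦ halfNormalCDF_mem_Icc (Real.sqrt_nonneg _)
  intro u hu v hv huv
  rw [sub_zero] at hu hv
  exact monotone_halfNormalCDF <| Real.sqrt_le_sqrt <| mul_le_mul (monotoneOn_quantile α hu hv huv)
    (monotoneOn_quantile β hu hv huv) (quantile_pos hβ0 hu).le (quantile_pos hα0 hv).le

lemma ae_neg_llr_quantile_le (hα : α ≪ volume) (hβ : β ≪ volume) (hα0 : α (Iic 0) = 0)
    (hβ0 : β (Iic 0) = 0) :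
    ∀ᵐ u ∂volume.restrict (Ioo (0 : ℝ) 1),
      -llr α volume (quantile α u) + -llr β volume (quantile β u) ≤
        Real.log (Real.pi / 2) + quantile α u * quantile β u +
          2 * (deriv (fun u ↦ halfNormalCDF √(quantile α u * quantile β u)) u - 1) := by
  filter_upwards [ae_hasDerivAt_quantile hα, ae_hasDerivAt_quantile hβ,
    ae_restrict_mem measurableSet_Ioo] with u hQ' hR' hu
  have hQ := quantile_pos hα0 hu
  have hR := quantile_pos hβ0 hu
  have hderiv : deriv (fun u ↦ halfNormalCDF √(quantile α u * quantile β u)) u = _ :=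
    ((hasDerivAt_halfNormalCDF _).comp u ((hQ'.mul hR').sqrt (mul_pos hQ hR).ne')).deriv
  have hbound := log_add_log_le_of_pos hQ hR (Real.exp_pos (-llr α volume (quantile α u)))
    (Real.exp_pos (-llr β volume (quantile β u)))
  rw [Real.log_exp, Real.log_exp] at hbound
  rw [hderiv]
  exact hbound

lemma diffEntropy_add_le_integral_quantile (hα : IsEntropyRegular α) (hβ : IsEntropyRegular β)
    (hα0 : α (Iic 0) = 0) (hβ0 : β (Iic 0) = 0)
    (hint : IntegrableOn (fun u ↦ quantile α u * quantile β u) (Ioo 0 1)) :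
    diffEntropy α + diffEntropy β ≤
      Real.log (Real.pi / 2) + ∫ u in Ioo (0 : ℝ) 1, quantile α u * quantile β u := by
  have := isProbabilityMeasure_restrict_Ioo_zero_one
  obtain ⟨hDint, hDle⟩ := setIntegral_deriv_halfNormalCDF_quantile_le hα0 hβ0
  set D := deriv fun u ↦ halfNormalCDF √(quantile α u * quantile β u)
  have hllr {μ : Measure ℝ} [IsProbabilityMeasure μ] (hμ : IsEntropyRegular μ) :
      IntegrableOn (fun u ↦ -llr μ volume (quantile μ u)) (Ioo 0 1) := by
    have hint := hμ.integrable_llr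
    rw [← map_quantile μ] at hint
    have hcomp := (hint.comp_measurable (measurable_quantile μ)).neg
    rwa [map_quantile] at hcomp
  have hmain : IntegrableOn (fun u ↦ Real.log (Real.pi / 2) + quantile α u * quantile β u)
      (Ioo 0 1) := (integrable_const _).add hint
  have hdefect : IntegrableOn (fun u ↦ 2 * (D u - 1)) (Ioo 0 1) :=
    (hDint.sub (integrable_const _)).const_mul 2
  calc diffEntropy α + diffEntropy β
      = ∫ u in Ioo (0 : ℝ) 1, (-llr α volume (quantile α u) + -llr β volume (quantile β u)) := by
        rw [integral_add (hllr hα) (hllr hβ), integral_neg, integral_neg,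
          integral_comp_quantile α hα.integrable_llr.1,
          integral_comp_quantile β hβ.integrable_llr.1, diffEntropy, diffEntropy]
    _ ≤ ∫ u in Ioo (0 : ℝ) 1, (Real.log (Real.pi / 2) + quantile α u * quantile β u +
          2 * (D u - 1)) :=
        integral_mono_ae ((hllr hα).add (hllr hβ)) (hmain.add hdefect)
          (ae_neg_llr_quantile_le hα.absolutelyContinuous hβ.absolutelyContinuous hα0 hβ0)
    _ = Real.log (Real.pi / 2) + (∫ u in Ioo (0 : ℝ) 1, quantile α u * quantile β u) +
          2 * ((∫ u in Ioo (0 : ℝ) 1, D u) - 1) := by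
        rw [integral_add hmain hdefect, integral_add (integrable_const _) hint,
          integral_const_mul, integral_sub hDint (integrable_const _)]
        simp only [integral_const, probReal_univ, one_smul]
    _ ≤ Real.log (Real.pi / 2) + ∫ u in Ioo (0 : ℝ) 1, quantile α u * quantile β u := by linarith

end Comonotone

lemma isCoupling_map_prodMk {Ω E : Type*} [MeasurableSpace Ω] [MeasurableSpace E]
    {P : Measure Ω} {X Y : Ω → E} (hX : Measurable X) (hY : Measurable Y) :
    IsCoupling (P.map fun ω ↦ (X ω, Y ω)) (P.map X) (P.map Y) :=
  ⟨Measure.fst_map_prodMk hY, Measure.snd_map_prodMk hX⟩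

namespace IsCoupling

section Basic

variable {E F : Type*} [MeasurableSpace E] [MeasurableSpace F] {μ ν : Measure E}
  {π : Measure (E × E)}

lemma measurePreserving_fst (h : IsCoupling π μ ν) : MeasurePreserving Prod.fst π μ :=
  ⟨measurable_fst, h.1⟩

lemma measurePreserving_snd (h : IsCoupling π μ ν) : MeasurePreserving Prod.snd π ν :=
  ⟨measurable_snd, h.2⟩

lemma isProbabilityMeasure (h : IsCoupling π μ ν) [IsProbabilityMeasure μ] :
    IsProbabilityMeasure π := by
  have : IsProbabilityMeasure (π.map Prod.fst) := h.1.symm ▸ inferInstance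
  exact Measure.isProbabilityMeasure_of_map Prod.fst

lemma swap (h : IsCoupling π μ ν) : IsCoupling (π.map Prod.swap) ν μ :=
  ⟨Measure.fst_map_swap.trans h.2, Measure.snd_map_swap.trans h.1⟩

lemma map (h : IsCoupling π μ ν) {f g : E → F} (hf : Measurable f) (hg : Measurable g) :
    IsCoupling (π.map (Prod.map f g)) (μ.map f) (ν.map g) := by
  rw [← h.1, ← h.2, Measure.map_map hf measurable_fst, Measure.map_map hg measurable_snd]
  exact isCoupling_map_prodMk (hf.comp measurable_fst) (hg.comp measurable_snd)

lemma of_cond [IsFiniteMeasure μ] [IsFiniteMeasure ν] {s t : Set E} (hs : MeasurableSet s)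
    (ht : MeasurableSet t) (hst : μ s = ν t) (hst' : μ sᶜ = ν tᶜ) {π' : Measure (E × E)}
    (h : IsCoupling π μ[|s] ν[|t]) (h' : IsCoupling π' μ[|sᶜ] ν[|tᶜ]) :
    IsCoupling (μ s • π + μ sᶜ • π') μ ν := by
  have hcond {ρ : Measure E} [IsFiniteMeasure ρ] {r : Set E} (hr : MeasurableSet r) :
      ρ r • ρ[|r] + ρ rᶜ • ρ[|rᶜ] = ρ := by
    ext A
    rw [Measure.add_apply, Measure.smul_apply, Measure.smul_apply, smul_eq_mul, smul_eq_mul,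
      mul_comm, mul_comm (ρ rᶜ)]
    exact cond_add_cond_compl_eq hr ρ
  constructor
  · rw [Measure.map_add _ _ measurable_fst, Measure.map_smul, Measure.map_smul, h.1, h'.1,
      hcond hs]
  · rw [Measure.map_add _ _ measurable_snd, Measure.map_smul, Measure.map_smul, h.2, h'.2, hst,
      hst', hcond ht]

end Basic

lemma integrable_inner {E : Type*} [NormedAddCommGroup E] [InnerProductSpace ℝ E]
    [MeasurableSpace E] {μ ν : Measure E} {π : Measure (E × E)} (h : IsCoupling π μ ν)
    (hμ : MemLp id 2 μ) (hν : MemLp id 2 ν) : Integrable (fun p ↦ ⟪p.1, p.2⟫) π := by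
  have hfst : MemLp Prod.fst 2 π := hμ.comp_measurePreserving h.measurePreserving_fst
  have hsnd : MemLp Prod.snd 2 π := hν.comp_measurePreserving h.measurePreserving_snd
  exact (hfst.norm.integrable_mul hsnd.norm).mono' (hfst.1.inner hsnd.1)
    (ae_of_all _ fun p ↦ norm_inner_le_norm p.1 p.2)

end IsCoupling

section EntropyLeCorrelation

variable {E : Type*} [NormedAddCommGroup E] [InnerProductSpace ℝ E] [MeasureSpace E]
  {c : ℝ} {μ ν : Measure E}

/-- Some coupling of `μ` and `ν` has correlation at least their joint differential entropy, up to
the additive constant `c`. -/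
def EntropyLeCorrelation (c : ℝ) (μ ν : Measure E) : Prop :=
  ∃ π, IsCoupling π μ ν ∧ diffEntropy μ + diffEntropy ν ≤ c + ∫ p, ⟪p.1, p.2⟫ ∂π

/-- The symmetrized Talagrand inequality on `E` in Lebesgue form: the bound of
`EntropyLeCorrelation` holds for all entropy-regular probability measures, the first of them
centered. -/
def EntropyCorrelationBound (E : Type*) [NormedAddCommGroup E] [InnerProductSpace ℝ E]
    [MeasureSpace E] (c : ℝ) : Prop :=
  ∀ (μ ν : Measure E) [IsProbabilityMeasure μ] [IsProbabilityMeasure ν],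
    IsEntropyRegular μ → IsEntropyRegular ν → ∫ x, x ∂μ = 0 → EntropyLeCorrelation c μ ν

namespace EntropyLeCorrelation

lemma symm (h : EntropyLeCorrelation c μ ν) : EntropyLeCorrelation c ν μ := by
  obtain ⟨π, hπ, hle⟩ := h
  refine ⟨π.map Prod.swap, hπ.swap, ?_⟩
  have hswap : ∫ p, ⟪p.1, p.2⟫ ∂π.map Prod.swap = ∫ p, ⟪p.2, p.1⟫ ∂π :=
    integral_map_equiv MeasurableEquiv.prodComm _
  rw [hswap, add_comm]
  simpa only [real_inner_comm] using hle

lemma of_map {F : Type*} [NormedAddCommGroup F] [InnerProductSpace ℝ F] [MeasureSpace F]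
    [SigmaFinite (volume : Measure E)] [SigmaFinite μ] [SigmaFinite ν] {A B : E ≃ᵐ F}
    (hA : MeasurePreserving A) (hB : MeasurePreserving B)
    (hμ : μ ≪ volume) (hν : ν ≪ volume)
    (hAB : ∀ π, IsCoupling π μ ν → ∫ p, ⟪A p.1, B p.2⟫ ∂π = ∫ p, ⟪p.1, p.2⟫ ∂π)
    (h : EntropyLeCorrelation c (μ.map A) (ν.map B)) : EntropyLeCorrelation c μ ν := by
  obtain ⟨π, hπ, hle⟩ := h
  have hπ' := hπ.map A.symm.measurable B.symm.measurable
  rw [A.map_symm_map, B.map_symm_map] at hπ'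
  refine ⟨_, hπ', ?_⟩
  have hpairing : ∫ p, ⟪A p.1, B p.2⟫ ∂π.map (Prod.map A.symm B.symm) = ∫ p, ⟪p.1, p.2⟫ ∂π :=
    (integral_map_equiv (A.symm.prodCongr B.symm) _).trans
      (by simp [MeasurableEquiv.prodCongr])
  rwa [← hAB _ hπ', hpairing, ← diffEntropy_map hA hμ, ← diffEntropy_map hB hν]

-- Cutting a law into two pieces of masses `p` and `1 - p` costs the entropy of the Bernoulli law
-- with parameter `p`, at most `log 2`; this is paid once for `μ` and once for `ν`.
lemma of_cond [SigmaFinite (volume : Measure E)] [IsProbabilityMeasure μ] [IsProbabilityMeasure ν]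
    (hμ : IsEntropyRegular μ) (hν : IsEntropyRegular ν) {s t : Set E} (hs : MeasurableSet s)
    (ht : MeasurableSet t) (hst : μ s = ν t) (h0 : μ s ≠ 0) (h1 : μ sᶜ ≠ 0)
    (h : EntropyLeCorrelation c μ[|s] ν[|t]) (h' : EntropyLeCorrelation c μ[|sᶜ] ν[|tᶜ]) :
    EntropyLeCorrelation (c + 2 * Real.log 2) μ ν := by
  obtain ⟨π, hπ, hle⟩ := h
  obtain ⟨π', hπ', hle'⟩ := h'
  have hst' : μ sᶜ = ν tᶜ := by rw [prob_compl_eq_one_sub hs, prob_compl_eq_one_sub ht, hst]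
  refine ⟨_, hπ.of_cond hs ht hst hst' hπ', ?_⟩
  have hreal : μ.real s = ν.real t := congrArg ENNReal.toReal hst
  have hreal' : μ.real sᶜ = ν.real tᶜ := congrArg ENNReal.toReal hst'
  have hint := hπ.integrable_inner (hμ.cond hs h0).memLp_id (hν.cond ht (hst ▸ h0)).memLp_id
  have hint' := hπ'.integrable_inner (hμ.cond hs.compl h1).memLp_id
    (hν.cond ht.compl (hst' ▸ h1)).memLp_id
  rw [integral_add_measure (hint.smul_measure (measure_ne_top _ _))
    (hint'.smul_measure (measure_ne_top _ _)), integral_smul_measure, integral_smul_measure,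
    ← measureReal_def, ← measureReal_def, smul_eq_mul, smul_eq_mul,
    diffEntropy_eq_cond_add_cond_compl hμ.absolutelyContinuous hμ.integrable_llr hs h0 h1,
    diffEntropy_eq_cond_add_cond_compl hν.absolutelyContinuous hν.integrable_llr ht (hst ▸ h0)
      (hst' ▸ h1), ← hreal, ← hreal']
  have hsum : μ.real s + μ.real sᶜ = 1 := probReal_add_probReal_compl hs
  linear_combination μ.real s * hle + μ.real sᶜ * hle' + c * hsum +
    2 * Real.binEntropy_le_log_two (p := μ.real s)

end EntropyLeCorrelation

end EntropyLeCorrelation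

section HalfSpace

variable {E : Type*} [NormedAddCommGroup E] [InnerProductSpace ℝ E] [FiniteDimensional ℝ E]
  [MeasurableSpace E] [BorelSpace E] {c : ℝ} {e w : E} {μ ν : Measure E}

lemma measurePreserving_transvection {f : Module.Dual ℝ E} {v : E} (h : f v = 0) :
    MeasurePreserving (LinearEquiv.transvection h).toContinuousLinearEquiv := by
  have hdet : LinearMap.det (LinearMap.transvection f v) = 1 := by
    rw [LinearMap.transvection.det, h, add_zero]
  have hmap := Measure.map_linearMap_addHaar_eq_smul_addHaar volume (hdet ▸ one_ne_zero)
  rw [hdet, inv_one, abs_one, ofReal_one, one_smul] at hmap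
  exact ⟨ContinuousLinearEquiv.continuous _ |>.measurable, hmap⟩

lemma ae_inner_ne (hμ : μ ≪ volume) (he : e ≠ 0) (s : ℝ) : ∀ᵐ z ∂μ, ⟪e, z⟫ ≠ s := by
  have hspan : (ℝ ∙ e)ᗮ ≠ ⊤ := by
    rwa [Ne, Submodule.orthogonal_eq_top_iff, Submodule.span_singleton_eq_bot]
  let H := AffineSubspace.mk' ((s / ‖e‖ ^ 2) • e) (ℝ ∙ e)ᗮ
  have hH : H ≠ ⊤ := fun h ↦ hspan <|
    (AffineSubspace.direction_mk' _ _).symm.trans (h ▸ AffineSubspace.direction_top ℝ E E)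
  filter_upwards [hμ.ae_le (measure_eq_zero_iff_ae_notMem.1
    (Measure.addHaar_affineSubspace volume H hH))] with z hz hzs
  refine hz (AffineSubspace.mem_mk'.2 (Submodule.mem_orthogonal_singleton_iff_inner_right.2 ?_))
  rw [vsub_eq_sub, inner_sub_right, inner_smul_right, real_inner_self_eq_norm_sq,
    div_mul_cancel₀ _ (pow_ne_zero 2 (norm_ne_zero_iff.2 he)), hzs, sub_self]

lemma EntropyLeCorrelation.of_map_sub_const [IsProbabilityMeasure μ] [IsProbabilityMeasure ν]
    (hμ : IsEntropyRegular μ) (hν : IsEntropyRegular ν) (hcent : ∫ y, y ∂ν = 0) (z₀ : E)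
    (h : EntropyLeCorrelation c (μ.map (· - z₀)) ν) : EntropyLeCorrelation c μ ν := by
  refine of_map (A := MeasurableEquiv.subRight z₀) (B := MeasurableEquiv.refl E)
    (measurePreserving_sub_right volume z₀) (MeasurePreserving.id _) hμ.absolutelyContinuous
    hν.absolutelyContinuous (fun π hπ ↦ ?_)
    ((Measure.map_id (μ := ν)).symm ▸ h)
  have hint : Integrable (fun p : E × E ↦ p.2) π :=
    hπ.measurePreserving_snd.integrable_comp_of_integrable hν.integrable_id
  have hzero : ∫ p, ⟪z₀, p.2⟫ ∂π = 0 := by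
    have hsnd : ∫ p, p.2 ∂π = ∫ y, y ∂ν :=
      hπ.2 ▸ (integral_map measurable_snd.aemeasurable measurable_id.aestronglyMeasurable).symm
    rw [integral_inner hint, hsnd, hcent, inner_zero_right]
  calc ∫ p, ⟪p.1 - z₀, p.2⟫ ∂π = ∫ p, (⟪p.1, p.2⟫ - ⟪z₀, p.2⟫) ∂π := by simp only [inner_sub_left]
    _ = ∫ p, ⟪p.1, p.2⟫ ∂π := by
      rw [integral_sub (hπ.integrable_inner hμ.memLp_id hν.memLp_id) (hint.const_inner z₀), hzero,
        sub_zero]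

/-- `EntropyLeCorrelation c μ ν` for all entropy-regular probability measures `μ`, `ν` concentrated
on the half-spaces with inner normals `e` and `w` respectively, provided that the mean of `μ` is
parallel to `w`. -/
def HalfSpaceBound (e w : E) (c : ℝ) : Prop :=
  ∀ (μ ν : Measure E) [IsProbabilityMeasure μ] [IsProbabilityMeasure ν],
    IsEntropyRegular μ → IsEntropyRegular ν → (∀ᵐ z ∂μ, 0 < ⟪e, z⟫) → (∀ᵐ y ∂ν, 0 < ⟪w, y⟫) →
    ∫ z, z ∂μ ∈ ℝ ∙ w → EntropyLeCorrelation c μ ν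

namespace HalfSpaceBound

lemma of_continuousLinearEquiv {e' w' : E} (h : HalfSpaceBound e' w' c) {A B : E ≃L[ℝ] E}
    (hA : MeasurePreserving A) (hB : MeasurePreserving B) (hAB : ∀ z y, ⟪A z, B y⟫ = ⟪z, y⟫)
    (he : ∀ z, 0 < ⟪e, z⟫ → 0 < ⟪e', A z⟫) (hw : ∀ y, 0 < ⟪w, y⟫ → 0 < ⟪w', B y⟫)
    (hmean : A w ∈ ℝ ∙ w') : HalfSpaceBound e w c := by
  intro μ ν _ _ hμ hν hμe hνw hμw
  have hAm := hA.measurable.aemeasurable (μ := μ)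
  have hBm := hB.measurable.aemeasurable (μ := ν)
  have := Measure.isProbabilityMeasure_map hAm
  have := Measure.isProbabilityMeasure_map hBm
  refine .of_map (A := A.toHomeomorph.toMeasurableEquiv) (B := B.toHomeomorph.toMeasurableEquiv)
    hA hB hμ.absolutelyContinuous hν.absolutelyContinuous (fun π _ ↦ by simp [hAB])
    (h (μ.map A) (ν.map B) (hμ.map (e := A.toHomeomorph.toMeasurableEquiv) hA
        (A.toContinuousLinearMap.comp_memLp' hμ.memLp_id))
      (hν.map (e := B.toHomeomorph.toMeasurableEquiv) hB
        (B.toContinuousLinearMap.comp_memLp' hν.memLp_id)) ?_ ?_ ?_)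
  · exact (ae_map_iff hAm (measurableSet_lt measurable_const (by fun_prop))).2 (hμe.mono he)
  · exact (ae_map_iff hBm (measurableSet_lt measurable_const (by fun_prop))).2 (hνw.mono hw)
  · obtain ⟨k, hk⟩ := Submodule.mem_span_singleton.1 hμw
    have hint : ∫ z, z ∂μ.map A = A (∫ z, z ∂μ) :=
      (integral_map hAm measurable_id.aestronglyMeasurable).trans (A.integral_comp_comm _)
    refine hint ▸ ?_
    rw [← hk, map_smul]
    exact Submodule.smul_mem _ _ hmean

lemma neg (h : HalfSpaceBound e w c) : HalfSpaceBound (-e) (-w) c :=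
  h.of_continuousLinearEquiv (A := .neg ℝ) (B := .neg ℝ) (Measure.measurePreserving_neg _)
    (Measure.measurePreserving_neg _) (by simp) (by simp) (by simp)
    (by simp [Submodule.mem_span_singleton_self])

-- The two shears are contragredient to each other; they turn both half-spaces into `{0 < ⟪e, z⟫}`.
lemma tilt (h : HalfSpaceBound e e c) (he : ‖e‖ = 1) (hew : 0 < ⟪e, w⟫) :
    HalfSpaceBound e w c := by
  set u : E := ⟪e, w⟫⁻¹ • w - e with hu
  have hee : ⟪e, e⟫ = 1 := by rw [real_inner_self_eq_norm_sq, he, one_pow]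
  have heu : ⟪e, u⟫ = 0 := by
    rw [hu, inner_sub_right, inner_smul_right, inv_mul_cancel₀ hew.ne', hee, sub_self]
  have hue : ⟪u, e⟫ = 0 := real_inner_comm u e ▸ heu
  have hA : innerₗ E (-e) u = 0 := by simp [heu]
  have hB : innerₗ E u e = 0 := hue
  refine h.of_continuousLinearEquiv (measurePreserving_transvection hA)
    (measurePreserving_transvection hB) (fun z y ↦ ?_) (fun z hz ↦ ?_) (fun y hy ↦ ?_) ?_
  all_goals simp only [LinearEquiv.coe_toContinuousLinearEquiv', LinearEquiv.transvection.apply,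
    innerₗ_apply_apply, inner_neg_left]
  · simp only [inner_add_left, inner_add_right, inner_smul_left, inner_smul_right, hue,
      real_inner_comm e z, RCLike.conj_to_real]
    ring
  · simpa [inner_add_right, inner_smul_right, heu] using hz
  · have : ⟪e, y + ⟪u, y⟫ • e⟫ = ⟪e, w⟫⁻¹ * ⟪w, y⟫ := by
      rw [inner_add_right, inner_smul_right, hee, hu, inner_sub_left, real_inner_smul_left]
      ring
    rw [this]
    positivity
  · refine Submodule.mem_span_singleton.2 ⟨⟪e, w⟫, ?_⟩
    rw [hu, neg_smul, smul_sub, smul_inv_smul₀ hew.ne']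
    abel

lemma entropyLeCorrelation_of_halfSpaces (h : HalfSpaceBound e w c) [IsProbabilityMeasure μ]
    [IsProbabilityMeasure ν] (hμ : IsEntropyRegular μ) (hν : IsEntropyRegular ν) (he : e ≠ 0)
    (hw : w ≠ 0) (hμν : μ {z | 0 < ⟪e, z⟫} = ν {y | 0 < ⟪w, y⟫}) (h0 : μ {z | 0 < ⟪e, z⟫} ≠ 0)
    (h1 : μ {z | 0 < ⟪e, z⟫}ᶜ ≠ 0) (hpos : ∫ z in {z | 0 < ⟪e, z⟫}, z ∂μ ∈ ℝ ∙ w)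
    (hmean : ∫ z, z ∂μ ∈ ℝ ∙ w) : EntropyLeCorrelation (c + 2 * Real.log 2) μ ν := by
  have hmeas (v : E) : MeasurableSet {z | 0 < ⟪v, z⟫} :=
    measurableSet_lt measurable_const (by fun_prop)
  have hcompl {ρ : Measure E} (hρ : ρ ≪ volume) {v : E} (hv : v ≠ 0) :
      ∀ᵐ z ∂ρ[|{z | 0 < ⟪v, z⟫}ᶜ], 0 < ⟪-v, z⟫ := by
    filter_upwards [ae_cond_mem (hmeas v).compl,
      ae_inner_ne (cond_absolutelyContinuous.trans hρ) hv 0] with z hz hz'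
    rw [inner_neg_left, neg_pos]
    exact lt_of_le_of_ne (not_lt.1 hz) hz'
  have h1' : ν {y | 0 < ⟪w, y⟫}ᶜ ≠ 0 := by
    rwa [prob_compl_eq_one_sub (hmeas w), ← hμν, ← prob_compl_eq_one_sub (hmeas e)]
  have := cond_isProbabilityMeasure h0
  have := cond_isProbabilityMeasure h1
  have := cond_isProbabilityMeasure (hμν ▸ h0)
  have := cond_isProbabilityMeasure h1'
  have hneg : ∫ z in {z | 0 < ⟪e, z⟫}ᶜ, z ∂μ ∈ ℝ ∙ w := by
    rw [eq_sub_of_add_eq' (integral_add_compl (hmeas e) hμ.integrable_id)]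
    exact Submodule.sub_mem _ hmean hpos
  refine .of_cond hμ hν (hmeas e) (hmeas w) hμν h0 h1
    (h _ _ (hμ.cond (hmeas e) h0) (hν.cond (hmeas w) (hμν ▸ h0)) (ae_cond_mem (hmeas e))
      (ae_cond_mem (hmeas w)) ?_)
    (h.neg _ _ (hμ.cond (hmeas e).compl h1) (hν.cond (hmeas w).compl h1')
      (hcompl hμ.absolutelyContinuous he) (hcompl hν.absolutelyContinuous hw) ?_)
  · rw [integral_cond]
    exact Submodule.smul_mem _ _ hpos
  · rw [integral_cond, ← Set.neg_singleton, Submodule.span_neg]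
    exact Submodule.smul_mem _ _ hneg

end HalfSpaceBound

end HalfSpace

section Split

lemma continuousAt_setIntegral_pos {X Ω G : Type*} [TopologicalSpace X]
    [FirstCountableTopology X] [MeasurableSpace Ω] [NormedAddCommGroup G] [NormedSpace ℝ G]
    {μ : Measure Ω} {h : X → Ω → ℝ} {x₀ : X} (hmeas : ∀ x, Measurable (h x))
    (hcont : ∀ ω, ContinuousAt (fun x ↦ h x ω) x₀) (h0 : ∀ᵐ ω ∂μ, h x₀ ω ≠ 0) {f : Ω → G}
    (hf : Integrable f μ) : ContinuousAt (fun x ↦ ∫ ω in {ω | 0 < h x ω}, f ω ∂μ) x₀ := by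
  have hs (x : X) : MeasurableSet {ω | 0 < h x ω} := measurableSet_lt measurable_const (hmeas x)
  simp_rw [← integral_indicator (hs _)]
  refine continuousAt_of_dominated (bound := fun ω ↦ ‖f ω‖)
    (.of_forall fun x ↦ hf.aestronglyMeasurable.indicator (hs x))
    (.of_forall fun x ↦ ae_of_all _ fun ω ↦ norm_indicator_le_norm_self _ _) hf.norm ?_
  filter_upwards [h0] with ω hω
  rcases lt_or_gt_of_ne hω with hlt | hgt
  · refine continuousAt_const (y := (0 : G)) |>.congr ?_
    filter_upwards [(hcont ω).eventually_lt_const hlt] with x hx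
    exact (indicator_of_notMem (s := {ω | 0 < h x ω}) (not_lt.2 hx.le) f).symm
  · refine continuousAt_const (y := f ω) |>.congr ?_
    filter_upwards [(hcont ω).eventually_const_lt hgt] with x hx
    exact (indicator_of_mem (s := {ω | 0 < h x ω}) hx f).symm

lemma setIntegral_lt_pos_of_integral_eq_zero {Ω : Type*} [MeasurableSpace Ω] {P : Measure Ω}
    [IsProbabilityMeasure P] {X : Ω → ℝ} (hX : Measurable X) (hint : Integrable X P)
    (hcent : ∫ ω, X ω ∂P = 0) {s : ℝ} (h0 : 0 < P.real {ω | s < X ω})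
    (h1 : P.real {ω | s < X ω} < 1) : 0 < ∫ ω in {ω | s < X ω}, X ω ∂P := by
  set A := {ω | s < X ω}
  have hA : MeasurableSet A := measurableSet_lt measurable_const hX
  have hint' : Integrable (fun ω ↦ X ω - s) P := hint.sub (integrable_const s)
  have hsub (B : Set Ω) : ∫ ω in B, (X ω - s) ∂P = ∫ ω in B, X ω ∂P - P.real B * s := by
    rw [integral_sub hint.integrableOn (integrable_const s), setIntegral_const, smul_eq_mul]
  have hpos : 0 < ∫ ω in A, (X ω - s) ∂P := by
    have hsupport : A ⊆ Function.support fun ω ↦ X ω - s := fun ω hω ↦ (sub_pos.2 hω).ne'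
    rw [setIntegral_pos_iff_support_of_nonneg_ae
      (ae_restrict_of_forall_mem hA fun ω hω ↦ (sub_pos.2 hω).le) hint'.integrableOn,
      inter_eq_right.2 hsupport]
    exact (toReal_pos_iff.1 h0).1
  have hnonpos : ∫ ω in Aᶜ, (X ω - s) ∂P ≤ 0 :=
    setIntegral_nonpos hA.compl fun ω hω ↦ sub_nonpos.2 (not_lt.1 hω)
  rw [hsub] at hpos hnonpos
  have hadd := integral_add_compl hA hint
  rw [hcent] at hadd
  rw [probReal_compl_eq_one_sub hA] at hnonpos
  linear_combination (1 - P.real A) * hpos + P.real A * hnonpos - P.real A * hadd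

variable {E : Type*} [NormedAddCommGroup E] [InnerProductSpace ℝ E] [FiniteDimensional ℝ E]
  [MeasurableSpace E] [BorelSpace E] {c : ℝ} {e w : E} {μ ν : Measure E}

lemma continuous_setIntegral_lt_inner {G : Type*} [NormedAddCommGroup G] [NormedSpace ℝ G]
    (hμ : μ ≪ volume) (he : e ≠ 0) {f : E → G} (hf : Integrable f μ) :
    Continuous fun s : ℝ ↦ ∫ z in {z | s < ⟪e, z⟫}, f z ∂μ := by
  refine continuous_iff_continuousAt.2 fun s ↦ ?_
  have := continuousAt_setIntegral_pos (μ := μ) (x₀ := s) (h := fun s z ↦ ⟪e, z⟫ - s)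
    (fun s ↦ by fun_prop) (fun z ↦ Continuous.continuousAt (by fun_prop))
    ((ae_inner_ne hμ he s).mono fun z hz ↦ sub_ne_zero.2 hz) hf
  simpa only [sub_pos] using this

lemma continuousAt_measureReal_halfSpace [IsFiniteMeasure ν] (hν : ν ≪ volume) (hw : w ≠ 0) :
    ContinuousAt (fun w ↦ ν.real {y | 0 < ⟪w, y⟫}) w := by
  have := continuousAt_setIntegral_pos (μ := ν) (x₀ := w) (h := fun w y ↦ ⟪w, y⟫)
    (fun w ↦ by fun_prop) (fun y ↦ Continuous.continuousAt (by fun_prop))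
    (ae_inner_ne hν hw 0) (integrable_const (1 : ℝ))
  simpa using this

lemma measureReal_halfSpace_pos [IsProbabilityMeasure ν] (hν : ν ≪ volume)
    (hint : Integrable (fun y ↦ y) ν) (hcent : ∫ y, y ∂ν = 0) (hw : w ≠ 0) :
    0 < ν.real {y | 0 < ⟪w, y⟫} := by
  refine measureReal_nonneg.lt_of_ne fun h0 ↦ ?_
  have hnonpos : ∀ᵐ y ∂ν, ⟪w, y⟫ ≤ 0 := by
    filter_upwards [measure_eq_zero_iff_ae_notMem.1 ((measureReal_eq_zero_iff).1 h0.symm)] with y hy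
    exact not_lt.1 hy
  have hzero : ∫ y, -⟪w, y⟫ ∂ν = 0 := by
    rw [integral_neg, integral_inner hint, hcent, inner_zero_right, neg_zero]
  have hae := (integral_eq_zero_iff_of_nonneg_ae (hnonpos.mono fun y ↦ neg_nonneg.2)
    (hint.const_inner w).neg).1 hzero
  obtain ⟨y, hy, hy'⟩ := (hae.and (ae_inner_ne hν hw 0)).exists
  exact hy' (neg_eq_zero.1 hy)

lemma exists_forall_le_measureReal_halfSpace [Nontrivial E] [IsProbabilityMeasure ν]
    (hν : ν ≪ volume) (hint : Integrable (fun y ↦ y) ν) (hcent : ∫ y, y ∂ν = 0) :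
    ∃ ε > 0, ∀ w : E, w ≠ 0 → ε ≤ ν.real {y | 0 < ⟪w, y⟫} := by
  have hcont : ContinuousOn (fun w : E ↦ ν.real {y | 0 < ⟪w, y⟫}) (Metric.sphere 0 1) :=
    fun w hw ↦ (continuousAt_measureReal_halfSpace hν
      (ne_zero_of_mem_unit_sphere ⟨w, hw⟩)).continuousWithinAt
  obtain ⟨w₀, hw₀, hmin⟩ := (isCompact_sphere (0 : E) 1).exists_isMinOn
    (NormedSpace.sphere_nonempty.2 zero_le_one) hcont
  refine ⟨_, measureReal_halfSpace_pos hν hint hcent (ne_zero_of_mem_unit_sphere ⟨w₀, hw₀⟩),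
    fun w hw ↦ (isMinOn_iff.1 hmin (‖w‖⁻¹ • w) ?_).trans_eq ?_⟩
  · simp [norm_smul, hw]
  · simp only [real_inner_smul_left, mul_pos_iff_of_pos_left (inv_pos.2 (norm_pos_iff.2 hw))]

lemma measureReal_halfSpace_add_neg_le_one [IsProbabilityMeasure ν] (w : E) :
    ν.real {y | 0 < ⟪w, y⟫} + ν.real {y | 0 < ⟪-w, y⟫} ≤ 1 := by
  rw [← measureReal_union (disjoint_left.2 fun y hy hy' ↦ ?_)
    (measurableSet_lt measurable_const (by fun_prop))]
  · exact measureReal_le_one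
  · rw [mem_ofPred_eq, inner_neg_left, neg_pos] at hy'
    exact lt_asymm hy hy'

lemma measureReal_quantile_lt_inner [IsProbabilityMeasure μ] (hμ : μ ≪ volume) (he : e ≠ 0) {u : ℝ}
    (hu : u ∈ Ioo (0 : ℝ) 1) : μ.real {z | quantile (μ.map (⟪e, ·⟫)) u < ⟪e, z⟫} = 1 - u := by
  have hmeas : Measurable (⟪e, ·⟫ : E → ℝ) := by fun_prop
  set α := μ.map (⟪e, ·⟫)
  have : IsProbabilityMeasure α := Measure.isProbabilityMeasure_map hmeas.aemeasurable
  have : NullSingletonClass α := ⟨fun s ↦ by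
    rw [Measure.map_apply hmeas (measurableSet_singleton s)]
    exact measure_eq_zero_iff_ae_notMem.2 (ae_inner_ne hμ he s)⟩
  calc μ.real {z | quantile α u < ⟪e, z⟫} = α.real (Iic (quantile α u))ᶜ := by
        rw [map_measureReal_apply hmeas measurableSet_Iic.compl, compl_Iic]
        rfl
    _ = 1 - u := by
        rw [probReal_compl_eq_one_sub measurableSet_Iic, ← cdf_eq_real, cdf_quantile α hu]

lemma inner_setIntegral_lt_inner_pos [IsProbabilityMeasure μ] (hint : Integrable (fun z ↦ z) μ)
    (hcent : ∫ z, z ∂μ = 0) {s : ℝ} (h0 : 0 < μ.real {z | s < ⟪e, z⟫})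
    (h1 : μ.real {z | s < ⟪e, z⟫} < 1) : 0 < ⟪e, ∫ z in {z | s < ⟪e, z⟫}, z ∂μ⟫ := by
  rw [← integral_inner hint.integrableOn]
  refine setIntegral_lt_pos_of_integral_eq_zero (by fun_prop) (hint.const_inner e) ?_ h0 h1
  rw [integral_inner hint, hcent, inner_zero_right]

-- As `s` increases the left side of the equation decreases from `1` to `0`, while the right side
-- stays between `ε` and `1 - ε` as long as both sides of the cut are charged.
lemma exists_measureReal_lt_inner_eq [IsProbabilityMeasure μ] [IsProbabilityMeasure ν]
    (hμ : μ ≪ volume) (hν : ν ≪ volume) (hμint : Integrable (fun z ↦ z) μ)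
    (hνint : Integrable (fun y ↦ y) ν) (hμcent : ∫ z, z ∂μ = 0) (hνcent : ∫ y, y ∂ν = 0)
    (he : e ≠ 0) :
    ∃ s : ℝ, 0 < μ.real {z | s < ⟪e, z⟫} ∧ μ.real {z | s < ⟪e, z⟫} < 1 ∧
      μ.real {z | s < ⟪e, z⟫} = ν.real {y | 0 < ⟪∫ z in {z | s < ⟪e, z⟫}, z ∂μ, y⟫} := by
  have : Nontrivial E := ⟨e, 0, he⟩
  obtain ⟨ε, hε, hlow⟩ := exists_forall_le_measureReal_halfSpace hν hνint hνcent
  have hupp (w : E) (hw : w ≠ 0) : ν.real {y | 0 < ⟪w, y⟫} ≤ 1 - ε := by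
    linarith [hlow (-w) (neg_ne_zero.2 hw), measureReal_halfSpace_add_neg_le_one (ν := ν) w]
  have hε2 : ε ≤ 1 / 2 := by linarith [hlow e he, hupp e he]
  set p : ℝ → ℝ := fun s ↦ μ.real {z | s < ⟪e, z⟫}
  set v : ℝ → E := fun s ↦ ∫ z in {z | s < ⟪e, z⟫}, z ∂μ
  have hp : Continuous p := by
    simpa using continuous_setIntegral_lt_inner hμ he (integrable_const (1 : ℝ))
  have hv : Continuous v := continuous_setIntegral_lt_inner hμ he hμint
  have hu : ε / 2 ∈ Ioo (0 : ℝ) 1 := by constructor <;> linarith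
  have hu' : 1 - ε / 2 ∈ Ioo (0 : ℝ) 1 := by constructor <;> linarith
  set s₀ := quantile (μ.map (⟪e, ·⟫)) (ε / 2)
  set s₁ := quantile (μ.map (⟪e, ·⟫)) (1 - ε / 2)
  have hs₀₁ : s₀ ≤ s₁ := monotoneOn_quantile _ hu hu' (by linarith)
  have hp₀ : p s₀ = 1 - ε / 2 := measureReal_quantile_lt_inner hμ he hu
  have hp₁ : p s₁ = 1 - (1 - ε / 2) := measureReal_quantile_lt_inner hμ he hu'
  have hanti : Antitone p := fun s t hst ↦ measureReal_mono fun z hz ↦ hst.trans_lt hz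
  have hp01 : ∀ s ∈ Icc s₀ s₁, 0 < p s ∧ p s < 1 := fun s hs ↦ by
    constructor <;> linarith [hanti hs.1, hanti hs.2]
  have hv0 : ∀ s ∈ Icc s₀ s₁, v s ≠ 0 := fun s hs hvs ↦ by
    have hpos : 0 < ⟪e, v s⟫ :=
      inner_setIntegral_lt_inner_pos hμint hμcent (hp01 s hs).1 (hp01 s hs).2
    rw [hvs, inner_zero_right] at hpos
    exact lt_irrefl 0 hpos
  have hcont : ContinuousOn (fun s ↦ p s - ν.real {y | 0 < ⟪v s, y⟫}) (Icc s₀ s₁) :=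
    fun s hs ↦ (hp.continuousAt.sub ((continuousAt_measureReal_halfSpace hν (hv0 s hs)).comp
      (f := v) hv.continuousAt)).continuousWithinAt
  obtain ⟨s, hs, hps⟩ := intermediate_value_Icc' hs₀₁ hcont
    (show (0 : ℝ) ∈ Icc _ _ from
      ⟨by linarith [hlow _ (hv0 s₁ (right_mem_Icc.2 hs₀₁))],
        by linarith [hupp _ (hv0 s₀ (left_mem_Icc.2 hs₀₁))]⟩)
  exact ⟨s, (hp01 s hs).1, (hp01 s hs).2, sub_eq_zero.1 hps⟩

lemma IsEntropyRegular.map_sub_const [IsProbabilityMeasure μ] (hμ : IsEntropyRegular μ) (z₀ : E) :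
    IsEntropyRegular (μ.map (· - z₀)) :=
  hμ.map (e := MeasurableEquiv.subRight z₀) (measurePreserving_sub_right volume z₀)
    (hμ.memLp_id.sub (memLp_const z₀))

lemma setIntegral_map_sub_const [IsFiniteMeasure μ] (hint : Integrable (fun z ↦ z) μ) (z₀ : E)
    (s : Set E) : ∫ z in s, z ∂μ.map (· - z₀) =
      ∫ z in (· - z₀) ⁻¹' s, z ∂μ - μ.real ((· - z₀) ⁻¹' s) • z₀ := by
  rw [← setIntegral_const, ← integral_sub hint.integrableOn (integrable_const z₀)]
  exact (MeasurableEquiv.subRight z₀).measurableEmbedding.setIntegral_map _ s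

lemma integral_map_sub_const [IsProbabilityMeasure μ] (hint : Integrable (fun z ↦ z) μ) (z₀ : E) :
    ∫ z, z ∂μ.map (· - z₀) = ∫ z, z ∂μ - z₀ := by
  simpa using setIntegral_map_sub_const hint z₀ univ

namespace HalfSpaceBound

-- Translating `μ` along the inner normal `w` of the half-space chosen for `ν` moves the cut of `μ`
-- to the origin and keeps the means of both of its pieces on the line `ℝ ∙ w`.
lemma entropyLeCorrelation_of_centered (h : HalfSpaceBound e e c) (he : ‖e‖ = 1)
    [IsProbabilityMeasure μ] [IsProbabilityMeasure ν] (hμ : IsEntropyRegular μ)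
    (hν : IsEntropyRegular ν) (hμcent : ∫ z, z ∂μ = 0) (hνcent : ∫ y, y ∂ν = 0) :
    EntropyLeCorrelation (c + 2 * Real.log 2) μ ν := by
  have he0 : e ≠ 0 := norm_ne_zero_iff.1 (he ▸ one_ne_zero)
  have hint : Integrable (fun z ↦ z) μ := hμ.integrable_id
  obtain ⟨s, h0, h1, hmass⟩ := exists_measureReal_lt_inner_eq hμ.absolutelyContinuous
    hν.absolutelyContinuous hint hν.integrable_id hμcent hνcent he0
  have hew := inner_setIntegral_lt_inner_pos hint hμcent h0 h1
  set w : E := ∫ z in {z | s < ⟪e, z⟫}, z ∂μ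
  set z₀ : E := (s / ⟪e, w⟫) • w
  have hz₀w : z₀ ∈ ℝ ∙ w := Submodule.smul_mem _ _ (Submodule.mem_span_singleton_self w)
  have hez₀ : ⟪e, z₀⟫ = s := by rw [real_inner_smul_right, div_mul_cancel₀ _ hew.ne']
  have hw0 : w ≠ 0 := fun hw ↦ hew.ne' (by rw [hw, inner_zero_right])
  have hpreimage : (· - z₀) ⁻¹' {z | 0 < ⟪e, z⟫} = {z | s < ⟪e, z⟫} := by
    ext z
    simp only [mem_preimage, mem_ofPred_eq, inner_sub_right, hez₀, sub_pos]
  have hmeas : MeasurableSet {z | 0 < ⟪e, z⟫} := measurableSet_lt measurable_const (by fun_prop)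
  have hmap : μ.map (· - z₀) {z | 0 < ⟪e, z⟫} = μ {z | s < ⟪e, z⟫} :=
    hpreimage ▸ (MeasurableEquiv.subRight z₀).map_apply _
  have : IsProbabilityMeasure (μ.map (· - z₀)) :=
    Measure.isProbabilityMeasure_map (measurable_sub_const z₀).aemeasurable
  refine .of_map_sub_const hμ hν hνcent z₀
    ((h.tilt he hew).entropyLeCorrelation_of_halfSpaces (hμ.map_sub_const z₀) hν he0 hw0
      ?_ ?_ ?_ ?_ ?_)
  · rw [hmap]
    exact (measureReal_eq_measureReal_iff).1 hmass
  · rw [hmap]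
    exact (toReal_pos_iff.1 h0).1.ne'
  · rw [prob_compl_eq_one_sub hmeas, hmap]
    exact tsub_pos_of_lt ((toReal_lt_toReal (measure_ne_top _ _) one_ne_top).1 h1) |>.ne'
  · rw [setIntegral_map_sub_const hint, hpreimage]
    exact Submodule.sub_mem _ (Submodule.mem_span_singleton_self w) (Submodule.smul_mem _ _ hz₀w)
  · rw [integral_map_sub_const hint, hμcent, zero_sub]
    exact Submodule.neg_mem _ hz₀w

lemma entropyCorrelationBound (h : HalfSpaceBound e e c) (he : ‖e‖ = 1) :
    EntropyCorrelationBound E (c + 2 * Real.log 2) := by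
  intro μ ν _ _ hμ hν hμcent
  have := Measure.isProbabilityMeasure_map (μ := ν)
    (measurable_sub_const (∫ y, y ∂ν)).aemeasurable
  refine (EntropyLeCorrelation.of_map_sub_const hν hμ hμcent (∫ y, y ∂ν)
    (h.entropyLeCorrelation_of_centered he (hν.map_sub_const _) hμ ?_ hμcent)).symm
  rw [integral_map_sub_const hν.integrable_id, sub_self]

end HalfSpaceBound

end Split

lemma integral_comp_of_measurePreserving {α β F : Type*} [MeasurableSpace α] [MeasurableSpace β]
    [NormedAddCommGroup F] [NormedSpace ℝ F] {μ : Measure α} {ν : Measure β} {f : α → β}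
    (hf : MeasurePreserving f μ ν) {g : β → F} (hg : AEStronglyMeasurable g ν) :
    ∫ x, g (f x) ∂μ = ∫ y, g y ∂ν := by
  rw [← hf.map_eq] at hg ⊢
  exact (integral_map hf.aemeasurable hg).symm

lemma integrable_exp_neg_norm_sq_div_two (E : Type*) [NormedAddCommGroup E]
    [InnerProductSpace ℝ E] [FiniteDimensional ℝ E] [MeasurableSpace E] [BorelSpace E] :
    Integrable fun x : E ↦ Real.exp (-‖x‖ ^ 2 / 2) := by
  refine (GaussianFourier.integrable_cexp_neg_mul_sq_norm_add (V := E) (b := 1 / 2)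
    (by norm_num) 0 0).norm.congr (ae_of_all _ fun x ↦ ?_)
  simp only [Complex.norm_exp]
  congr 1
  simp [← Complex.ofReal_pow]
  ring

lemma integrable_exp_neg_norm_sq_div_two_real :
    Integrable fun t : ℝ ↦ Real.exp (-‖t‖ ^ 2 / 2) := by
  simpa [neg_div, div_eq_inv_mul] using integrable_exp_neg_mul_sq (b := 2⁻¹) (by norm_num)

section QuantileLift

/-- The map carrying `ρ ⊗ Lebesgue` on `E × (0, 1)` to `ρ ⊗ₘ κ`, acting on each fiber as the
quantile function of `κ`. -/
noncomputable def quantileLift {E : Type*} [MeasurableSpace E] (κ : Kernel E ℝ) (p : E × ℝ) :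
    E × ℝ :=
  (p.1, quantile (κ p.1) p.2)

lemma measurePreserving_quantileLift {E : Type*} [MeasurableSpace E] (ρ : Measure E) [SFinite ρ]
    (κ : Kernel E ℝ) [IsMarkovKernel κ] :
    MeasurePreserving (quantileLift κ) (ρ.prod (volume.restrict (Ioo 0 1))) (ρ ⊗ₘ κ) := by
  have hm : Measurable (quantileLift κ) := measurable_fst.prodMk (measurable_quantile_kernel κ)
  refine ⟨hm, Measure.ext fun s hs ↦ ?_⟩
  rw [Measure.map_apply hm hs, Measure.prod_apply (hm hs), Measure.compProd_apply hs]
  refine lintegral_congr fun x ↦ ?_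
  conv_rhs => rw [← map_quantile (κ x)]
  rw [Measure.map_apply (measurable_quantile _) (measurable_prodMk_left hs)]
  rfl

variable {E F : Type*} [MeasurableSpace E] [MeasurableSpace F] {Q : Measure F}
  [IsProbabilityMeasure Q]

lemma measurePreserving_quantileLift_condKernel {ρ : Measure (E × ℝ)} [IsFiniteMeasure ρ]
    {f : F → E} (hf : MeasurePreserving f Q ρ.fst) :
    MeasurePreserving (fun p : F × ℝ ↦ quantileLift ρ.condKernel (f p.1, p.2))
      (Q.prod (volume.restrict (Ioo 0 1))) ρ := by
  have hlift := measurePreserving_quantileLift ρ.fst ρ.condKernel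
  rw [ρ.disintegrate ρ.condKernel] at hlift
  exact hlift.comp (hf.prod (MeasurePreserving.id _))

lemma integral_diffEntropy_add_le_integral_quantile {κ η : F → Measure ℝ}
    [∀ x, IsProbabilityMeasure (κ x)] [∀ x, IsProbabilityMeasure (η x)]
    (hκ : ∀ᵐ x ∂Q, IsEntropyRegular (κ x)) (hη : ∀ᵐ x ∂Q, IsEntropyRegular (η x))
    (hκ0 : ∀ᵐ x ∂Q, κ x (Iic 0) = 0) (hη0 : ∀ᵐ x ∂Q, η x (Iic 0) = 0)
    (hκi : Integrable (fun x ↦ diffEntropy (κ x)) Q)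
    (hηi : Integrable (fun x ↦ diffEntropy (η x)) Q)
    (hint : Integrable (fun p : F × ℝ ↦ quantile (κ p.1) p.2 * quantile (η p.1) p.2)
      (Q.prod (volume.restrict (Ioo 0 1)))) :
    ∫ x, diffEntropy (κ x) ∂Q + ∫ x, diffEntropy (η x) ∂Q ≤ Real.log (Real.pi / 2) +
      ∫ p, quantile (κ p.1) p.2 * quantile (η p.1) p.2 ∂Q.prod (volume.restrict (Ioo 0 1)) := by
  have hfiber : ∀ᵐ x ∂Q, diffEntropy (κ x) + diffEntropy (η x) ≤
      Real.log (Real.pi / 2) + ∫ u in Ioo (0 : ℝ) 1, quantile (κ x) u * quantile (η x) u := by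
    filter_upwards [hκ, hη, hκ0, hη0, hint.prod_right_ae] with x h h' h0 h0' hx
      using diffEntropy_add_le_integral_quantile h h' h0 h0' hx
  have hmono := integral_mono_ae (hκi.add hηi)
    ((integrable_const _).add hint.integral_prod_left) hfiber
  rwa [integral_add' hκi hηi, integral_add' (integrable_const _) hint.integral_prod_left,
    integral_const, probReal_univ, one_smul, ← integral_prod _ hint] at hmono

lemma condKernel_Iic_eq_zero_ae {ρ : Measure (E × ℝ)} [IsFiniteMeasure ρ]
    (h : ∀ᵐ z ∂ρ, 0 < z.2) : ∀ᵐ x ∂ρ.fst, ρ.condKernel x (Iic 0) = 0 := by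
  rw [← ρ.disintegrate ρ.condKernel] at h
  filter_upwards [Measure.ae_ae_of_ae_compProd h] with x hx
  exact measure_mono_null (fun t (ht : t ≤ 0) ↦ ht.not_gt) (ae_iff.1 hx)

end QuantileLift

section PositiveStage

variable {E : Type*} [NormedAddCommGroup E] [InnerProductSpace ℝ E] [FiniteDimensional ℝ E]
  [MeasurableSpace E] [BorelSpace E] {c : ℝ}

lemma IsCoupling.exists_isCoupling_prod_of_pos {μ ν : Measure (E × ℝ)} [IsProbabilityMeasure μ]
    [IsProbabilityMeasure ν] {π : Measure (E × E)} (hπ : IsCoupling π μ.fst ν.fst)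
    (hμ : IsEntropyRegular μ) (hν : IsEntropyRegular ν) (hμ0 : ∀ᵐ z ∂μ, 0 < z.2)
    (hν0 : ∀ᵐ z ∂ν, 0 < z.2) :
    ∃ π', IsCoupling π' μ ν ∧ ∫ q, ⟪q.1, q.2⟫ ∂π +
      (∫ x, diffEntropy (μ.condKernel x) ∂μ.fst + ∫ x, diffEntropy (ν.condKernel x) ∂ν.fst) ≤
      Real.log (Real.pi / 2) + ∫ p, (⟪p.1.1, p.2.1⟫ + p.1.2 * p.2.2) ∂π' := by
  have hexp := integrable_exp_neg_norm_sq_div_two E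
  have hexp' := integrable_exp_neg_norm_sq_div_two_real
  have := isProbabilityMeasure_restrict_Ioo_zero_one
  have := hπ.isProbabilityMeasure
  have hπ1 := hπ.measurePreserving_fst
  have hπ2 := hπ.measurePreserving_snd
  have hX := measurePreserving_quantileLift_condKernel hπ1
  have hY := measurePreserving_quantileLift_condKernel hπ2
  have hinner := (hπ.integrable_inner (hμ.fst hexp hexp').memLp_id
    (hν.fst hexp hexp').memLp_id).comp_fst (volume.restrict (Ioo (0 : ℝ) 1))
  have hmul := ((memLp_snd_of_memLp_id hμ.memLp_id).comp_measurePreserving hX).integrable_mul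
    ((memLp_snd_of_memLp_id hν.memLp_id).comp_measurePreserving hY)
  have hμ_cond := hμ.integrable_diffEntropy_condKernel hexp hexp'
  have hν_cond := hν.integrable_diffEntropy_condKernel hexp hexp'
  have hfibers := integral_diffEntropy_add_le_integral_quantile
    (hπ1.quasiMeasurePreserving.ae (hμ.condKernel_ae hexp hexp'))
    (hπ2.quasiMeasurePreserving.ae (hν.condKernel_ae hexp hexp'))
    (hπ1.quasiMeasurePreserving.ae (condKernel_Iic_eq_zero_ae hμ0))
    (hπ2.quasiMeasurePreserving.ae (condKernel_Iic_eq_zero_ae hν0))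
    (hπ1.integrable_comp_of_integrable hμ_cond) (hπ2.integrable_comp_of_integrable hν_cond) hmul
  rw [integral_comp_of_measurePreserving hπ1 hμ_cond.1,
    integral_comp_of_measurePreserving hπ2 hν_cond.1] at hfibers
  have hsum := integral_add hinner hmul
  rw [integral_fun_fst (fun q : E × E ↦ ⟪q.1, q.2⟫), probReal_univ, one_smul] at hsum
  refine ⟨_, hX.map_eq ▸ hY.map_eq ▸ isCoupling_map_prodMk hX.measurable hY.measurable, ?_⟩
  rw [integral_map (hX.measurable.prodMk hY.measurable).aemeasurable (by fun_prop)]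
  refine (add_le_add_right hfibers _).trans_eq ?_
  rw [add_left_comm]
  exact congrArg _ hsum.symm

lemma EntropyCorrelationBound.exists_isCoupling_prod_of_pos (hE : EntropyCorrelationBound E c)
    {μ ν : Measure (E × ℝ)} [IsProbabilityMeasure μ] [IsProbabilityMeasure ν]
    (hμ : IsEntropyRegular μ) (hν : IsEntropyRegular ν) (hμ0 : ∀ᵐ z ∂μ, 0 < z.2)
    (hν0 : ∀ᵐ z ∂ν, 0 < z.2) (hmean : ∫ z, z.1 ∂μ = 0) :
    ∃ π, IsCoupling π μ ν ∧ diffEntropy μ + diffEntropy ν ≤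
      c + Real.log (Real.pi / 2) + ∫ p, (⟪p.1.1, p.2.1⟫ + p.1.2 * p.2.2) ∂π := by
  have hexp := integrable_exp_neg_norm_sq_div_two E
  have hexp' := integrable_exp_neg_norm_sq_div_two_real
  have hmean_fst : ∫ x, x ∂μ.fst = 0 := by
    rw [← hmean]
    exact integral_map measurable_fst.aemeasurable (by fun_prop)
  obtain ⟨π, hπ, hle⟩ := hE μ.fst ν.fst (hμ.fst hexp hexp') (hν.fst hexp hexp') hmean_fst
  obtain ⟨π', hπ', hle'⟩ := hπ.exists_isCoupling_prod_of_pos hμ hν hμ0 hν0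
  refine ⟨π', hπ', ?_⟩
  rw [hμ.diffEntropy_eq_fst_add_integral_condKernel hexp hexp',
    hν.diffEntropy_eq_fst_add_integral_condKernel hexp hexp']
  linarith

lemma EntropyCorrelationBound.halfSpaceBound_withLp (hE : EntropyCorrelationBound E c) :
    HalfSpaceBound (WithLp.toLp 2 ((0 : E), (1 : ℝ))) (WithLp.toLp 2 (0, 1))
      (c + Real.log (Real.pi / 2)) := by
  intro μ ν _ _ hμ hν hμ0 hν0 hmean
  let e : WithLp 2 (E × ℝ) ≃ᵐ E × ℝ := (MeasurableEquiv.toLp 2 (E × ℝ)).symm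
  have he : MeasurePreserving e := WithLp.volume_preserving_ofLp E ℝ
  have hmem {ρ : Measure (WithLp 2 (E × ℝ))} (hρ : IsEntropyRegular ρ) : MemLp e 2 ρ :=
    (WithLp.prodContinuousLinearEquiv 2 ℝ E ℝ).toContinuousLinearMap.comp_memLp' hρ.memLp_id
  have hpos {ρ : Measure (WithLp 2 (E × ℝ))}
      (hρ : ∀ᵐ z ∂ρ, 0 < ⟪WithLp.toLp 2 ((0 : E), (1 : ℝ)), z⟫) : ∀ᵐ z ∂ρ.map e, 0 < z.2 := by
    refine (ae_map_iff e.measurable.aemeasurable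
      (measurableSet_lt measurable_const measurable_snd)).2 (hρ.mono fun z hz ↦ ?_)
    simpa [e, WithLp.prod_inner_apply] using hz
  have := Measure.isProbabilityMeasure_map (μ := μ) e.measurable.aemeasurable
  have := Measure.isProbabilityMeasure_map (μ := ν) e.measurable.aemeasurable
  have hmean_fst : ∫ z, z.1 ∂μ.map e = 0 := by
    rw [integral_map_equiv]
    obtain ⟨t, ht⟩ := Submodule.mem_span_singleton.1 hmean
    exact ((WithLp.fstL 2 ℝ E ℝ).integral_comp_comm hμ.integrable_id).trans (by simp [← ht])
  obtain ⟨π, hπ, hle⟩ := hE.exists_isCoupling_prod_of_pos (hμ.map he (hmem hμ))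
    (hν.map he (hmem hν)) (hpos hμ0) (hpos hν0) hmean_fst
  have hπ' := hπ.map e.symm.measurable e.symm.measurable
  rw [e.map_symm_map, e.map_symm_map] at hπ'
  refine ⟨_, hπ', ?_⟩
  rw [diffEntropy_map he hμ.absolutelyContinuous, diffEntropy_map he hν.absolutelyContinuous] at hle
  refine hle.trans_eq (congrArg _ ?_)
  refine ((integral_map_equiv (e.symm.prodCongr e.symm) _).trans ?_).symm
  refine integral_congr_ae (ae_of_all _ fun p ↦ ?_)
  simp [e, MeasurableEquiv.prodCongr, WithLp.prod_inner_apply, mul_comm]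

lemma EntropyCorrelationBound.withLp_prod_real (hE : EntropyCorrelationBound E c) :
    EntropyCorrelationBound (WithLp 2 (E × ℝ)) (c + Real.log (2 * Real.pi)) := by
  have hlog : Real.log (Real.pi / 2) + 2 * Real.log 2 = Real.log (2 * Real.pi) := by
    rw [Real.log_div Real.pi_ne_zero two_ne_zero, Real.log_mul two_ne_zero Real.pi_ne_zero]
    ring
  rw [← hlog, ← add_assoc]
  exact hE.halfSpaceBound_withLp.entropyCorrelationBound (by simp)

end PositiveStage

section EuclideanSpace

lemma EntropyCorrelationBound.of_linearIsometryEquiv {E F : Type*} [NormedAddCommGroup E]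
    [InnerProductSpace ℝ E] [FiniteDimensional ℝ E] [MeasurableSpace E] [BorelSpace E]
    [NormedAddCommGroup F] [InnerProductSpace ℝ F] [FiniteDimensional ℝ F] [MeasurableSpace F]
    [BorelSpace F] {c : ℝ} (h : EntropyCorrelationBound E c) (i : F ≃ₗᵢ[ℝ] E) :
    EntropyCorrelationBound F c := by
  intro μ ν _ _ hμ hν hmean
  have hi : MeasurePreserving i.toMeasurableEquiv := i.measurePreserving
  have hmem {ρ : Measure F} (hρ : IsEntropyRegular ρ) : MemLp i.toMeasurableEquiv 2 ρ :=
    i.toContinuousLinearEquiv.toContinuousLinearMap.comp_memLp' hρ.memLp_id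
  have := Measure.isProbabilityMeasure_map (μ := μ) hi.measurable.aemeasurable
  have := Measure.isProbabilityMeasure_map (μ := ν) hi.measurable.aemeasurable
  refine .of_map hi hi hμ.absolutelyContinuous hν.absolutelyContinuous
    (fun π _ ↦ by simp) (h _ _ (hμ.map hi (hmem hμ)) (hν.map hi (hmem hν)) ?_)
  rw [integral_map_equiv]
  exact (i.toContinuousLinearEquiv.toContinuousLinearMap.integral_comp_comm
    hμ.integrable_id).trans (by simp [hmean])

lemma entropyCorrelationBound_euclideanSpace_fin_zero :
    EntropyCorrelationBound (EuclideanSpace ℝ (Fin 0)) 0 := by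
  intro μ ν _ _ _ _ _
  have hvolume (ρ : Measure (EuclideanSpace ℝ (Fin 0))) [IsProbabilityMeasure ρ] :
      ρ = volume := by
    refine Measure.ext fun s _ ↦ ?_
    induction s using Subsingleton.set_cases with
    | h0 => simp
    | h1 => simp [volume_euclideanSpace_eq_dirac]
  have hentropy : diffEntropy (volume : Measure (EuclideanSpace ℝ (Fin 0))) = 0 :=
    neg_eq_zero.2 (integral_eq_zero_of_ae (llr_self _))
  refine ⟨μ.prod ν, ⟨Measure.fst_prod, Measure.snd_prod⟩, ?_⟩
  rw [hvolume μ, hvolume ν, hentropy]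
  simp [Subsingleton.elim _ (0 : EuclideanSpace ℝ (Fin 0))]

lemma entropyCorrelationBound_euclideanSpace (n : ℕ) :
    EntropyCorrelationBound (EuclideanSpace ℝ (Fin n)) (n * Real.log (2 * Real.pi)) := by
  induction n with
  | zero => simpa using entropyCorrelationBound_euclideanSpace_fin_zero
  | succ n ih =>
    have hrank : Module.finrank ℝ (WithLp 2 (EuclideanSpace ℝ (Fin n) × ℝ)) = n + 1 := by
      rw [(WithLp.linearEquiv 2 ℝ (EuclideanSpace ℝ (Fin n) × ℝ)).finrank_eq]
      simp
    rw [Nat.cast_succ, add_one_mul]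
    exact ih.withLp_prod_real.of_linearIsometryEquiv ((stdOrthonormalBasis ℝ _).reindex
      (finCongr hrank)).repr.symm

end EuclideanSpace

section Gaussian

lemma integral_exp_neg_norm_sq_div_two (E : Type*) [NormedAddCommGroup E]
    [InnerProductSpace ℝ E] [FiniteDimensional ℝ E] [MeasurableSpace E] [BorelSpace E] :
    ∫ x : E, Real.exp (-‖x‖ ^ 2 / 2) = (2 * Real.pi) ^ (Module.finrank ℝ E / 2 : ℝ) := by
  have h := GaussianFourier.integral_rexp_neg_mul_sq_norm (V := E) (b := 1 / 2) (by norm_num)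
  rw [div_div_eq_mul_div, div_one, mul_comm] at h
  rw [← h]
  congr! 3
  ring

lemma stdGaussian_eq_normGaussian (d : ℕ) :
    stdGaussian d = normGaussian (EuclideanSpace ℝ (Fin d)) := by
  rw [stdGaussian, normGaussian, Measure.tilted, integral_exp_neg_norm_sq_div_two,
    finrank_euclideanSpace_fin, neg_div, Real.rpow_neg Real.two_pi_pos.le]
  simp only [div_eq_inv_mul]

lemma relEnt_eq_ofReal_of_ne_top {E : Type*} [MeasurableSpace E] {μ γ : Measure E}
    (h : relEnt μ γ ≠ ∞) :
    μ ≪ γ ∧ Integrable (llr μ γ) μ ∧ relEnt μ γ = ENNReal.ofReal (∫ x, llr μ γ x ∂μ) := by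
  unfold relEnt at h ⊢
  split_ifs at h ⊢ with hμ
  exacts [⟨hμ.1, hμ.2, rfl⟩, absurd rfl h]

lemma isEntropyRegular_of_relEnt_stdGaussian_ne_top {d : ℕ} {μ : Measure (EuclideanSpace ℝ (Fin d))}
    [IsProbabilityMeasure μ] (h2 : MemLp id 2 μ) (h : relEnt μ (stdGaussian d) ≠ ∞) :
    IsEntropyRegular μ := by
  rw [stdGaussian_eq_normGaussian] at h
  obtain ⟨hμ, hint, -⟩ := relEnt_eq_ofReal_of_ne_top h
  exact isEntropyRegular_of_normGaussian (integrable_exp_neg_norm_sq_div_two _) hμ hint h2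

lemma two_mul_relEnt_stdGaussian_of_ne_top {d : ℕ} {μ : Measure (EuclideanSpace ℝ (Fin d))}
    [IsProbabilityMeasure μ] (h2 : MemLp id 2 μ) (h : relEnt μ (stdGaussian d) ≠ ∞) :
    2 * relEnt μ (stdGaussian d) = ENNReal.ofReal
      (∫ x, ‖x‖ ^ 2 ∂μ - 2 * diffEntropy μ + d * Real.log (2 * Real.pi)) := by
  have htwo (a : ℝ) : 2 * ENNReal.ofReal a = ENNReal.ofReal (2 * a) := by
    rw [ENNReal.ofReal_mul zero_le_two, ENNReal.ofReal_ofNat]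
  have hμ := isEntropyRegular_of_relEnt_stdGaussian_ne_top h2 h
  rw [stdGaussian_eq_normGaussian] at h ⊢
  rw [(relEnt_eq_ofReal_of_ne_top h).2.2,
    hμ.integral_llr_normGaussian (integrable_exp_neg_norm_sq_div_two _),
    integral_exp_neg_norm_sq_div_two, Real.log_rpow Real.two_pi_pos, finrank_euclideanSpace_fin,
    integral_div, integral_neg, htwo]
  congr 1
  ring

end Gaussian

lemma IsCoupling.W2sq_le {E : Type*} [NormedAddCommGroup E] [InnerProductSpace ℝ E]
    [MeasurableSpace E] {μ ν : Measure E} {π : Measure (E × E)} (h : IsCoupling π μ ν)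
    (hμ : MemLp id 2 μ) (hν : MemLp id 2 ν) : W2sq μ ν ≤ ENNReal.ofReal
      (∫ x, ‖x‖ ^ 2 ∂μ + ∫ x, ‖x‖ ^ 2 ∂ν - 2 * ∫ p, ⟪p.1, p.2⟫ ∂π) := by
  have hμ_sq := hμ.integrable_norm_pow two_ne_zero
  have hν_sq := hν.integrable_norm_pow two_ne_zero
  have hfst : Integrable (fun p : E × E ↦ ‖p.1‖ ^ 2) π :=
    h.measurePreserving_fst.integrable_comp_of_integrable hμ_sq
  have hsnd : Integrable (fun p : E × E ↦ ‖p.2‖ ^ 2) π :=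
    h.measurePreserving_snd.integrable_comp_of_integrable hν_sq
  have hsum : Integrable (fun p : E × E ↦ ‖p.1‖ ^ 2 + ‖p.2‖ ^ 2) π := hfst.add hsnd
  have hinner := (h.integrable_inner hμ hν).const_mul 2
  have hexpand (p : E × E) : ‖p.1 - p.2‖ ^ 2 = ‖p.1‖ ^ 2 + ‖p.2‖ ^ 2 - 2 * ⟪p.1, p.2⟫ := by
    rw [norm_sub_sq_real]
    ring
  calc W2sq μ ν ≤ ∫⁻ p, (‖p.1 - p.2‖₊ : ℝ≥0∞) ^ 2 ∂π := iInf₂_le π h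
    _ = ∫⁻ p, ENNReal.ofReal (‖p.1 - p.2‖ ^ 2) ∂π := by
      simp_rw [ENNReal.ofReal_pow (norm_nonneg _), ofReal_norm, enorm_eq_nnnorm]
    _ = ENNReal.ofReal (∫ p, (‖p.1‖ ^ 2 + ‖p.2‖ ^ 2 - 2 * ⟪p.1, p.2⟫) ∂π) := by
      simp_rw [hexpand]
      exact (ofReal_integral_eq_lintegral_ofReal (hsum.sub hinner)
        (ae_of_all _ fun p ↦ (hexpand p).subst (sq_nonneg _))).symm
    _ = _ := by
      rw [integral_sub hsum hinner, integral_const_mul, integral_add hfst hsnd]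
      congr! 3
      · exact integral_comp_of_measurePreserving h.measurePreserving_fst hμ_sq.1
      · exact integral_comp_of_measurePreserving h.measurePreserving_snd hν_sq.1

/-- **Sharp symmetrized Talagrand inequality** (Theorem 1.1, Fathi): for any centered
probability measure `μ` on `ℝ^d` with finite second moment and any probability measure `ν`
with finite second moment, `W₂(μ,ν)² ≤ 2 Ent_γ(μ) + 2 Ent_γ(ν)`. -/
theorem symmetrized_talagrand (d : ℕ) (hd : 1 ≤ d)
    (μ ν : Measure (EuclideanSpace ℝ (Fin d)))
    [IsProbabilityMeasure μ] [IsProbabilityMeasure ν]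
    (hμ2 : Integrable (fun x => ‖x‖ ^ 2) μ) (hν2 : Integrable (fun x => ‖x‖ ^ 2) ν)
    (hcent : ∫ x, x ∂μ = 0) :
    W2sq μ ν ≤ 2 * relEnt μ (stdGaussian d) + 2 * relEnt ν (stdGaussian d) := by
  rcases eq_or_ne (relEnt μ (stdGaussian d)) ∞ with hμ | hμ
  · simp [hμ]
  rcases eq_or_ne (relEnt ν (stdGaussian d)) ∞ with hν | hν
  · simp [hν]
  have hμL : MemLp id 2 μ := (memLp_two_iff_integrable_sq_norm aestronglyMeasurable_id).2 hμ2
  have hνL : MemLp id 2 ν := (memLp_two_iff_integrable_sq_norm aestronglyMeasurable_id).2 hν2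
  obtain ⟨π, hπ, hle⟩ := entropyCorrelationBound_euclideanSpace d μ ν
    (isEntropyRegular_of_relEnt_stdGaussian_ne_top hμL hμ)
    (isEntropyRegular_of_relEnt_stdGaussian_ne_top hνL hν) hcent
  rw [two_mul_relEnt_stdGaussian_of_ne_top hμL hμ, two_mul_relEnt_stdGaussian_of_ne_top hνL hν]
  refine (hπ.W2sq_le hμL hνL).trans (le_trans ?_ ENNReal.ofReal_add_le)
  exact ENNReal.ofReal_le_ofReal (by linarith)
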